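/- Let G be a plane graph with outer cycle C, let p1, p2 ∈ V(C), and let L be a list assignment for G such that |L(v)| ≥ 5 for every v ∈ V(G) − V(C), |L(v)| ≥ 3 for every v ∈ V(C) − {p1, p2}, |L(p1)| ≥ 2 and |L(p2)| ≥ 2. Then G has an L-coloring. -/

import Mathlib

/-!
Common definitions: plane graphs (given by a concrete embedding in the plane),
outer face, canvases, list colorings, governments, harmonicas and coloring
harmonicas, following Postle–Thomas,
"Five-list-coloring graphs on surfaces III".
-/

open Set

universe u

/-- A finite simple graph together with an embedding in the plane:
each vertex gets a point, each edge a simple arc joining its endpoints;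
arcs avoid other vertices, and two distinct edges meet only in common
endpoints. -/
structure PlaneGraph (V : Type u) where
  verts : Set V
  Adj : V → V → Prop
  finite_verts : verts.Finite
  adj_symm : ∀ u v, Adj u v → Adj v u
  adj_irrefl : ∀ v, ¬Adj v v
  adj_mem : ∀ u v, Adj u v → u ∈ verts
  pos : V → ℝ × ℝ
  arc : Sym2 V → Set (ℝ × ℝ)
  pos_injOn : Set.InjOn pos verts
  arc_arc : ∀ u v, Adj u v → ∃ f : ℝ → ℝ × ℝ,
    ContinuousOn f (Set.Icc 0 1) ∧ Set.InjOn f (Set.Icc 0 1) ∧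
    f '' Set.Icc 0 1 = arc s(u, v) ∧ f 0 = pos u ∧ f 1 = pos v
  arc_avoid : ∀ u v, Adj u v → ∀ w ∈ verts, pos w ∈ arc s(u, v) → w = u ∨ w = v
  arc_meet : ∀ u v x y, Adj u v → Adj x y → s(u, v) ≠ s(x, y) →
    arc s(u, v) ∩ arc s(x, y) ⊆ pos '' (({u, v} : Set V) ∩ ({x, y} : Set V))

namespace PlaneGraph

variable {V : Type u}

/-- The point set of the drawing of the plane graph. -/
def image (G : PlaneGraph V) : Set (ℝ × ℝ) :=
  G.pos '' G.verts ∪ ⋃ (u : V) (v : V) (_ : G.Adj u v), G.arc s(u, v)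

/-- The outer (unbounded) face of the drawing. -/
def outerFace (G : PlaneGraph V) : Set (ℝ × ℝ) :=
  {p | p ∉ G.image ∧ ¬Bornology.IsBounded (connectedComponentIn G.imageᶜ p)}

/-- A vertex incident with (i.e. on the boundary of) the outer face. -/
def OnOuter (G : PlaneGraph V) (v : V) : Prop := G.pos v ∈ frontier G.outerFace

/-- An edge incident with (i.e. on the boundary of) the outer face. -/
def EdgeOnOuter (G : PlaneGraph V) (u v : V) : Prop :=
  G.arc s(u, v) ⊆ frontier G.outerFace

/-- The vertices of the boundary of the outer face. -/
def boundaryVerts (G : PlaneGraph V) : Set V := {v | v ∈ G.verts ∧ G.OnOuter v}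

/-- Connectivity of a plane graph. -/
def Connected (G : PlaneGraph V) : Prop :=
  G.verts.Nonempty ∧ ∀ u ∈ G.verts, ∀ v ∈ G.verts, Relation.ReflTransGen G.Adj u v

/-- `H` is a (plane) subgraph of `G`, drawn the same way. -/
def IsSubgraph (H G : PlaneGraph V) : Prop :=
  H.verts ⊆ G.verts ∧ (∀ u v, H.Adj u v → G.Adj u v) ∧
  (∀ v ∈ H.verts, H.pos v = G.pos v) ∧
  (∀ u v, H.Adj u v → H.arc s(u, v) = G.arc s(u, v))

/-- Delete a set of vertices (and all incident edges) from a plane graph. -/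
def deleteVerts (G : PlaneGraph V) (s : Set V) : PlaneGraph V where
  verts := G.verts \ s
  Adj u v := G.Adj u v ∧ u ∉ s ∧ v ∉ s
  finite_verts := G.finite_verts.subset Set.diff_subset
  adj_symm := fun u v h => ⟨G.adj_symm u v h.1, h.2.2, h.2.1⟩
  adj_irrefl := fun v h => G.adj_irrefl v h.1
  adj_mem := fun u v h => ⟨G.adj_mem u v h.1, h.2.1⟩
  pos := G.pos
  arc := G.arc
  pos_injOn := G.pos_injOn.mono Set.diff_subset
  arc_arc := fun u v h => G.arc_arc u v h.1
  arc_avoid := fun u v h w hw hm => G.arc_avoid u v h.1 w hw.1 hm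
  arc_meet := fun u v x y h h' hne => G.arc_meet u v x y h.1 h'.1 hne

/-- `G` has a proper coloring from the lists `L`. -/
def HasLColoring (G : PlaneGraph V) (L : V → Finset ℕ) : Prop :=
  ∃ φ : V → ℕ, (∀ v ∈ G.verts, φ v ∈ L v) ∧ ∀ u v, G.Adj u v → φ u ≠ φ v

/-- A vertex of degree exactly one. -/
def DegreeOne (G : PlaneGraph V) (x : V) : Prop :=
  (∃ a, G.Adj x a) ∧ ∀ a b, G.Adj x a → G.Adj x b → a = b

end PlaneGraph

/-- The cyclic successor of an index in a list. -/
def cycNext {V : Type u} (C : List V) (i : Fin C.length) : Fin C.length :=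
  ⟨((i : ℕ) + 1) % C.length, Nat.mod_lt _ (lt_of_le_of_lt (Nat.zero_le _) i.isLt)⟩

/-- The list `C` is a cycle of `G` whose image is exactly the boundary of the
outer face of `G`; i.e. `G` is a plane graph with outer cycle `C`. -/
def PlaneGraph.IsOuterCycle {V : Type u} (G : PlaneGraph V) (C : List V) : Prop :=
  C.Nodup ∧ 3 ≤ C.length ∧ (∀ v ∈ C, v ∈ G.verts) ∧
  (∀ i : Fin C.length, G.Adj (C.get i) (C.get (cycNext C i))) ∧
  frontier G.outerFace =
    G.pos '' {v | v ∈ C} ∪ ⋃ i : Fin C.length, G.arc s(C.get i, C.get (cycNext C i))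

/-- `pq` is an edge of the cycle (given as a list) `C`. -/
def IsCycleEdge {V : Type u} (C : List V) (p q : V) : Prop :=
  ∃ i : Fin C.length, s(p, q) = s(C.get i, C.get (cycNext C i))

/-- `(G, S, L)` is a canvas, where the subgraph `S` of the boundary of the
outer face of `G` is given by its vertex set `Sverts` and adjacency `SAdj`. -/
structure IsCanvas {V : Type u} (G : PlaneGraph V) (Sverts : Set V) (SAdj : V → V → Prop)
    (L : V → Finset ℕ) : Prop where
  sadj_symm : ∀ u v, SAdj u v → SAdj v u
  sadj_sub : ∀ u v, SAdj u v → G.Adj u v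
  sadj_mem : ∀ u v, SAdj u v → u ∈ Sverts
  sverts_sub : Sverts ⊆ G.verts
  sverts_outer : ∀ v ∈ Sverts, G.OnOuter v
  sedges_outer : ∀ u v, SAdj u v → G.EdgeOnOuter u v
  lists_nonempty : ∀ v ∈ G.verts, (L v).Nonempty
  card_inner : ∀ v ∈ G.verts, ¬G.OnOuter v → 5 ≤ (L v).card
  card_outside_S : ∀ v ∈ G.verts, v ∉ Sverts → 3 ≤ (L v).card
  scolorable : ∃ φ : V → ℕ, (∀ v ∈ Sverts, φ v ∈ L v) ∧ ∀ u v, SAdj u v → φ u ≠ φ v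

/-- The adjacency relation of the single-edge path `p₁p₂`. -/
def pathAdj {V : Type u} (p1 p2 : V) : V → V → Prop :=
  fun u v => (u = p1 ∧ v = p2) ∨ (u = p2 ∧ v = p1)

/-- `(G, P, L)` is a canvas whose precolored subgraph is a path `P = p₁p₂` of
length one (in the boundary of the outer face of `G`). -/
def IsPathCanvas {V : Type u} (G : PlaneGraph V) (p1 p2 : V) (L : V → Finset ℕ) : Prop :=
  p1 ≠ p2 ∧ IsCanvas G {p1, p2} (pathAdj p1 p2) L

/-- `c = (c₁, c₂)` is a proper `L`-coloring of the edge `p₁p₂`. -/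
def ProperEdgeColoring {V : Type u} (L : V → Finset ℕ) (p1 p2 : V) (c : ℕ × ℕ) : Prop :=
  c.1 ∈ L p1 ∧ c.2 ∈ L p2 ∧ c.1 ≠ c.2

/-- `Φ_T(P', 𝒞)`: the colorings of the edge `q₁q₂` extendable to an `L`-coloring
of `G` whose restriction to `p₁p₂` lies in `C`. -/
def Phi {V : Type u} (G : PlaneGraph V) (L : V → Finset ℕ) (p1 p2 q1 q2 : V)
    (C : Set (ℕ × ℕ)) : Set (ℕ × ℕ) :=
  {c | ∃ φ : V → ℕ, (∀ v ∈ G.verts, φ v ∈ L v) ∧ (∀ u v, G.Adj u v → φ u ≠ φ v) ∧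
    (φ p1, φ p2) ∈ C ∧ φ q1 = c.1 ∧ φ q2 = c.2}

/-- The set of colors used on the first vertex of the path. -/
def fstColors (C : Set (ℕ × ℕ)) : Set ℕ := Prod.fst '' C

/-- The set of colors used on the second vertex of the path. -/
def sndColors (C : Set (ℕ × ℕ)) : Set ℕ := Prod.snd '' C

/-- A dictatorship: at least two (distinct) colorings, all agreeing on one of
the two vertices (the dictator). -/
def IsDictatorship (C : Set (ℕ × ℕ)) : Prop :=
  (∃ c ∈ C, ∃ d ∈ C, c ≠ d) ∧
  ((∃ a, ∀ c ∈ C, c.1 = a) ∨ (∃ a, ∀ c ∈ C, c.2 = a))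

/-- A democracy: exactly the two colorings `(x, y)` and `(y, x)`. -/
def IsDemocracy (C : Set (ℕ × ℕ)) : Prop :=
  ∃ x y : ℕ, x ≠ y ∧ C = {(x, y), (y, x)}

/-- A government is a dictatorship or a democracy. -/
def IsGovernment (C : Set (ℕ × ℕ)) : Prop := IsDictatorship C ∨ IsDemocracy C

/-- A confederacy: not a government, but the union of two governments. -/
def IsConfederacy (C : Set (ℕ × ℕ)) : Prop :=
  ¬IsGovernment C ∧ ∃ C1 C2 : Set (ℕ × ℕ), IsGovernment C1 ∧ IsGovernment C2 ∧ C = C1 ∪ C2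

/-- The canvas `(G, p₁p₂, L)` is a harmonica from the path `p₁p₂` to the path
`q₁q₂` with government `C`. -/
inductive IsHarmonica {V : Type u} (L : V → Finset ℕ) :
    PlaneGraph V → V → V → V → V → Set (ℕ × ℕ) → Prop where
  /-- Rule (i): `G = P = P'`. -/
  | same (G : PlaneGraph V) (p1 p2 q1 q2 : V) (C : Set (ℕ × ℕ))
      (hcanvas : IsPathCanvas G p1 p2 L)
      (hproper : ∀ c ∈ C, ProperEdgeColoring L p1 p2 c)
      (hgov : IsGovernment C)
      (hq : (q1 = p1 ∧ q2 = p2) ∨ (q1 = p2 ∧ q2 = p1))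
      (hverts : G.verts = {p1, p2})
      (hedges : ∀ u v, G.Adj u v → pathAdj p1 p2 u v) :
      IsHarmonica L G p1 p2 q1 q2 C
  /-- Rule (ii): `C` is a dictatorship, `G = P ∪ P'`, `V(P) ∩ V(P') = {z}`
  where `z` is the dictator. -/
  | cherry (G : PlaneGraph V) (p1 p2 q1 q2 z : V) (C : Set (ℕ × ℕ))
      (hcanvas : IsPathCanvas G p1 p2 L)
      (hproper : ∀ c ∈ C, ProperEdgeColoring L p1 p2 c)
      (hdict : IsDictatorship C)
      (hq : q1 ≠ q2) (hqadj : G.Adj q1 q2) (hqout : G.EdgeOnOuter q1 q2)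
      (hverts : G.verts = {p1, p2, q1, q2})
      (hedges : ∀ u v, G.Adj u v → pathAdj p1 p2 u v ∨ pathAdj q1 q2 u v)
      (hz : (({p1, p2} : Set V) ∩ ({q1, q2} : Set V)) = {z})
      (hzdict : (z = p1 ∧ ∃ a, ∀ c ∈ C, c.1 = a) ∨ (z = p2 ∧ ∃ a, ∀ c ∈ C, c.2 = a)) :
      IsHarmonica L G p1 p2 q1 q2 C
  /-- Rule (iii): `C` is a dictatorship with dictator `z ∈ V(P)` in color `c`,
  sitting on a triangle `z u₁ u₂`. -/
  | dict (G : PlaneGraph V) (p1 p2 q1 q2 z w u1 u2 : V) (c : ℕ) (L0 : Finset ℕ)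
      (C C' : Set (ℕ × ℕ))
      (hcanvas : IsPathCanvas G p1 p2 L)
      (hproper : ∀ d ∈ C, ProperEdgeColoring L p1 p2 d)
      (hdict : IsDictatorship C)
      (hq : q1 ≠ q2) (hqadj : G.Adj q1 q2) (hqout : G.EdgeOnOuter q1 q2)
      (hz : (z = p1 ∧ w = p2 ∧ (∀ d ∈ C, d.1 = c) ∧
              (u1 = w → sndColors C = (L0 : Set ℕ)) ∧
              (u2 = w → sndColors C = (L0 : Set ℕ))) ∨
            (z = p2 ∧ w = p1 ∧ (∀ d ∈ C, d.2 = c) ∧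
              (u1 = w → fstColors C = (L0 : Set ℕ)) ∧
              (u2 = w → fstColors C = (L0 : Set ℕ))))
      (hzu1 : G.Adj z u1) (hzu2 : G.Adj z u2) (hu12 : G.Adj u1 u2)
      (hL0 : L0.card = 2)
      (hLu1 : u1 ∉ ({p1, p2} : Set V) → L u1 = L0 ∪ {c})
      (hLu2 : u2 ∉ ({p1, p2} : Set V) → L u2 = L0 ∪ {c})
      (hu1P : u1 ∈ ({p1, p2} : Set V) → u1 = w)
      (hu2P : u2 ∈ ({p1, p2} : Set V) → u2 = w)
      (hdem : IsDemocracy C')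
      (hC'1 : fstColors C' = (L0 : Set ℕ)) (hC'2 : sndColors C' = (L0 : Set ℕ))
      (hrec : IsHarmonica L (G.deleteVerts (({p1, p2} : Set V) \ {u1, u2})) u1 u2 q1 q2 C') :
      IsHarmonica L G p1 p2 q1 q2 C
  /-- Rule (iv), with `i = 1`: `C` is a democracy, `z` is a common neighbor of
  `p₁, p₂`, and `p₁` is deleted. -/
  | demo1 (G : PlaneGraph V) (p1 p2 q1 q2 z : V) (a b c : ℕ) (L0 : Finset ℕ)
      (C C' : Set (ℕ × ℕ))
      (hcanvas : IsPathCanvas G p1 p2 L)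
      (hproper : ∀ d ∈ C, ProperEdgeColoring L p1 p2 d)
      (hdemC : IsDemocracy C)
      (hq : q1 ≠ q2) (hqadj : G.Adj q1 q2) (hqout : G.EdgeOnOuter q1 q2)
      (hz1 : G.Adj z p1) (hz2 : G.Adj z p2)
      (hLz : L z = L0 ∪ {c})
      (hC1 : fstColors C = (L0 : Set ℕ)) (hC2 : sndColors C = (L0 : Set ℕ))
      (hab : a ≠ b) (hL0ab : (L0 : Set ℕ) = {a, b})
      (hC' : C' = {(c, a), (c, b)})
      (hrec : IsHarmonica L (G.deleteVerts {p1}) z p2 q1 q2 C') :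
      IsHarmonica L G p1 p2 q1 q2 C
  /-- Rule (iv), with `i = 2`: `C` is a democracy, `z` is a common neighbor of
  `p₁, p₂`, and `p₂` is deleted. -/
  | demo2 (G : PlaneGraph V) (p1 p2 q1 q2 z : V) (a b c : ℕ) (L0 : Finset ℕ)
      (C C' : Set (ℕ × ℕ))
      (hcanvas : IsPathCanvas G p1 p2 L)
      (hproper : ∀ d ∈ C, ProperEdgeColoring L p1 p2 d)
      (hdemC : IsDemocracy C)
      (hq : q1 ≠ q2) (hqadj : G.Adj q1 q2) (hqout : G.EdgeOnOuter q1 q2)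
      (hz1 : G.Adj z p1) (hz2 : G.Adj z p2)
      (hLz : L z = L0 ∪ {c})
      (hC1 : fstColors C = (L0 : Set ℕ)) (hC2 : sndColors C = (L0 : Set ℕ))
      (hab : a ≠ b) (hL0ab : (L0 : Set ℕ) = {a, b})
      (hC' : C' = {(c, a), (c, b)})
      (hrec : IsHarmonica L (G.deleteVerts {p2}) z p1 q1 q2 C') :
      IsHarmonica L G p1 p2 q1 q2 C

/-- `(G, L)` is a coloring harmonica from `uv` to `w` (source `Sum.inr (u, v)`)
or from `u` to `w` (source `Sum.inl u`). -/
inductive IsColoringHarmonica {V : Type u} [DecidableEq V] :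
    PlaneGraph V → (V → Finset ℕ) → V ⊕ V × V → V → Prop where
  /-- `G` is a triangle with vertex set `{u, v, w}`, `L(u) = L(v) = L(w)` and
  `|L(u)| = 2`. -/
  | tri (G : PlaneGraph V) (L : V → Finset ℕ) (u v w : V)
      (hconn : G.Connected) (huv : u ≠ v) (huw : u ≠ w) (hvw : v ≠ w)
      (hu : G.OnOuter u) (hv : G.OnOuter v) (hw : G.OnOuter w)
      (huvout : G.EdgeOnOuter u v)
      (hverts : G.verts = {u, v, w})
      (hadjuv : G.Adj u v) (hadjvw : G.Adj v w) (hadjuw : G.Adj u w)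
      (hLuv : L u = L v) (hLvw : L v = L w) (hcard : (L u).card = 2) :
      IsColoringHarmonica G L (Sum.inr (u, v)) w
  /-- There is a triangle `uvz` on the outer face; delete one or both of
  `u, v` and recurse from `z`. -/
  | step (G : PlaneGraph V) (L : V → Finset ℕ) (u v w z : V) (s : Set V)
      (hconn : G.Connected) (huv : u ≠ v) (huw : u ≠ w) (hvw : v ≠ w)
      (hu : G.OnOuter u) (hv : G.OnOuter v) (hw : G.OnOuter w)
      (huvout : G.EdgeOnOuter u v)
      (hadjuv : G.Adj u v) (hadjuz : G.Adj u z) (hadjvz : G.Adj v z)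
      (hz : G.OnOuter z)
      (hLuv : L u = L v) (hsub : L u ⊆ L z)
      (hcardu : (L u).card = 2) (hcardz : (L z).card = 3)
      (hs : s = {u} ∨ s = {v} ∨ s = ({u, v} : Set V))
      (hrec : IsColoringHarmonica (G.deleteVerts s)
        (Function.update L z (L z \ L u)) (Sum.inl z) w) :
      IsColoringHarmonica G L (Sum.inr (u, v)) w
  /-- `|L(u)| = 1`, `u` sits on a triangle `uxy`; delete `u` and recurse
  from `xy`. -/
  | vert (G : PlaneGraph V) (L : V → Finset ℕ) (u w x y : V)
      (hconn : G.Connected) (huw : u ≠ w)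
      (hu : G.OnOuter u) (hw : G.OnOuter w)
      (hx : G.OnOuter x) (hy : G.OnOuter y)
      (hadjux : G.Adj u x) (hadjuy : G.Adj u y) (hadjxy : G.Adj x y)
      (hcardu : (L u).card = 1)
      (hLxy : L x \ L u = L y \ L u) (hcardx : (L x \ L u).card = 2)
      (hrec : IsColoringHarmonica (G.deleteVerts {u})
        (Function.update (Function.update L x (L x \ L u)) y (L y \ L u))
        (Sum.inr (x, y)) w) :
      IsColoringHarmonica G L (Sum.inl u) w

/-- `(G, L)` contains a coloring harmonica `(H, L')` with the given source and
target: `H` is a subgraph of `G` and `L'` agrees with `L` on `V(H)`. -/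
def ContainsColoringHarmonica {V : Type u} [DecidableEq V] (G : PlaneGraph V)
    (L : V → Finset ℕ) (st : V ⊕ V × V) (w : V) : Prop :=
  ∃ (H : PlaneGraph V) (L' : V → Finset ℕ), H.IsSubgraph G ∧
    (∀ x ∈ H.verts, L' x = L x) ∧ IsColoringHarmonica H L' st w

/-- `v` is a cutvertex of the boundary of the outer face of `G`. -/
def BoundaryCutvertex {V : Type u} (G : PlaneGraph V) (v : V) : Prop :=
  ∃ a b : V, a ∈ G.boundaryVerts ∧ b ∈ G.boundaryVerts ∧ a ≠ v ∧ b ≠ v ∧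
    Relation.ReflTransGen (fun x y => G.Adj x y ∧ G.EdgeOnOuter x y) a b ∧
    ¬Relation.ReflTransGen
      (fun x y => G.Adj x y ∧ G.EdgeOnOuter x y ∧ x ≠ v ∧ y ≠ v) a b

open Classical in
/-- The list assignment of the democratic reduction `T(P, L0, x)`:
remove the colors of `L0` from the list of `x` and from the lists of all
neighbors of `P` other than `y`. -/
noncomputable def reducedL {V : Type u} (G : PlaneGraph V) (L : V → Finset ℕ)
    (L0 : Finset ℕ) (Q : List V) (x y : V) : V → Finset ℕ := fun w =>
  if w = x ∨ (w ≠ y ∧ ∃ p ∈ Q, G.Adj w p) then L w \ L0 else L w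

/-- The vertex set of the precolored subgraph of the democratic reduction:
`S ∖ V(P)`, together with `x` as an isolated vertex if its new list is
smaller than 3. -/
def reducedSverts {V : Type u} (Sverts : Set V) (Q : List V) (x : V)
    (L' : V → Finset ℕ) : Set V :=
  {v | (v ∈ Sverts ∧ v ∉ Q) ∨ (v = x ∧ (L' x).card < 3)}

/-- The adjacency of the precolored subgraph of the democratic reduction:
`S ∖ V(P)`. -/
def reducedSAdj {V : Type u} (SAdj : V → V → Prop) (Q : List V) : V → V → Prop :=
  fun u v => SAdj u v ∧ u ∉ Q ∧ v ∉ Q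


theorem exp_lift_square {a b c d : ℂ} (α : Path a b) (β : Path c d)
    (h : ∀ s t, α s ≠ β t) :
    ∃ H : unitInterval × unitInterval → ℂ, Continuous H ∧
      ∀ s t, Complex.exp (H (s, t)) = α s - β t := by
  have cov := Complex.isCoveringMap_exp
  let K : C(unitInterval × unitInterval, {z : ℂ // z ≠ 0}) :=
    ⟨fun q => ⟨α q.1 - β q.2, sub_ne_zero.2 (h q.1 q.2)⟩, by fun_prop⟩
  let f0 : C(unitInterval, {z : ℂ // z ≠ 0}) :=
    ⟨fun t => K (0, t), by fun_prop⟩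
  have h00 : f0 0 = ⟨_, (Complex.log (f0 0).1).exp_ne_zero⟩ := by
    apply Subtype.ext
    exact (Complex.exp_log (f0 0).2).symm
  obtain ⟨Γ, hΓ, -⟩ := cov.exists_path_lifts f0 (Complex.log (f0 0).1) h00
  have hK : ∀ a, K (0, a) = ⟨_, (Γ a).exp_ne_zero⟩ := fun a => (congrFun hΓ a).symm
  refine ⟨cov.liftHomotopy K Γ hK, (cov.liftHomotopy K Γ hK).continuous, fun s t => ?_⟩
  have := congrFun (cov.liftHomotopy_lifts K Γ hK) (s, t)
  exact congrArg Subtype.val this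

theorem exp_lift_unique {f g : unitInterval → ℂ} (hf : Continuous f) (hg : Continuous g)
    (h : ∀ t, Complex.exp (f t) = Complex.exp (g t)) : f 1 - f 0 = g 1 - g 0 := by
  have cov := Complex.isCoveringMap_exp
  have key : f = fun t => g t + (f 0 - g 0) := by
    refine cov.eq_of_comp_eq hf (by fun_prop) ?_ 0 (by ring)
    funext t
    apply Subtype.ext
    simp only [Function.comp]
    rw [Complex.exp_add, Complex.exp_sub, h 0, div_self (Complex.exp_ne_zero _), mul_one, h]
  have := congrFun key 1
  rw [this]; ring

/-- The order sign used in the parity computation. -/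
def ordSign {N : ℕ} (x y : Fin N) : ℤ := if x < y then 0 else 1

theorem exists_winding {N : ℕ} (pos : Fin N → ℂ) (γ : ∀ i j, Path (pos i) (pos j)) :
    ∃ n : Fin N → Fin N → Fin N → ℤ, ∀ i j k l, i ≠ k → i ≠ l → j ≠ k → j ≠ l →
      (∀ s t, γ i j s ≠ γ k l t) →
      (ordSign j k - ordSign k j) + (ordSign k i - ordSign i k) + (ordSign l j - ordSign j l)
        + (ordSign i l - ordSign l i)
        + 2 * (n i j k + n k l j - n i j l - n k l i) = 0 := by
  classical
  let lam : Fin N → Fin N → ℂ := fun x y => Complex.log (pos (min x y) - pos (max x y))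
  let ell : Fin N → Fin N → ℂ := fun x y => lam x y + (ordSign x y : ℂ) * (Real.pi * Complex.I)
  have hlam : ∀ x y, lam x y = lam y x := fun x y => by simp only [lam, min_comm, max_comm]
  have hell : ∀ x y, x ≠ y → pos x ≠ pos y → Complex.exp (ell x y) = pos x - pos y := by
    intro x y hxy hp
    rcases lt_or_gt_of_ne hxy with h | h
    · simp only [ell, lam, ordSign, h, min_eq_left h.le, max_eq_right h.le, if_true]
      simp [Complex.exp_log (sub_ne_zero.2 hp)]
    · simp only [ell, lam, ordSign, not_lt.2 h.le, min_eq_right h.le, max_eq_left h.le, if_false]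
      rw [Complex.exp_add, Complex.exp_log (sub_ne_zero.2 hp.symm)]
      simp [Complex.exp_pi_mul_I]
  let P : Fin N → Fin N → Fin N → (unitInterval → ℂ) → Prop := fun i j v g =>
    Continuous g ∧ ∀ t, Complex.exp (g t) = γ i j t - pos v
  have hn : ∀ i j v, ∃ n : ℤ, ∀ g, P i j v g → i ≠ v → j ≠ v →
      g 1 - g 0 = ell j v - ell i v + 2 * Real.pi * Complex.I * n := by
    intro i j v
    by_cases hex : ∃ g, P i j v g ∧ i ≠ v ∧ j ≠ v
    · obtain ⟨g, hg, hi, hj⟩ := hex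
      have e1 := hg.2 1
      have e0 := hg.2 0
      simp only [Path.target, Path.source] at e1 e0
      have p1 : pos j ≠ pos v := fun h => Complex.exp_ne_zero (g 1) (by rw [e1, h, sub_self])
      have p0 : pos i ≠ pos v := fun h => Complex.exp_ne_zero (g 0) (by rw [e0, h, sub_self])
      have : Complex.exp (g 1 - g 0) = Complex.exp (ell j v - ell i v) := by
        rw [Complex.exp_sub, Complex.exp_sub, e1, e0, hell _ _ hj p1, hell _ _ hi p0]
      obtain ⟨n, hn⟩ := Complex.exp_eq_exp_iff_exists_int.1 this
      refine ⟨n, fun g' hg' _ _ => ?_⟩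
      rw [exp_lift_unique hg'.1 hg.1 (fun t => by rw [hg'.2, hg.2]), hn]
      ring
    · exact ⟨0, fun g hg hi hj => (hex ⟨g, hg, hi, hj⟩).elim⟩
  choose n hn using hn
  refine ⟨n, fun i j k l hik hil hjk hjl hd => ?_⟩
  obtain ⟨H, Hc, He⟩ := exp_lift_square (γ i j) (γ k l) hd
  have q1 := hn i j k (fun s => H (s, 0)) ⟨by fun_prop, fun t => by rw [He]; simp⟩ hik hjk
  have q2 := hn i j l (fun s => H (s, 1)) ⟨by fun_prop, fun t => by rw [He]; simp⟩ hil hjl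
  have q3 := hn k l i (fun s => H (0, s) + Real.pi * Complex.I)
    ⟨by fun_prop, fun t => by rw [Complex.exp_add, He, Complex.exp_pi_mul_I]; simp⟩
    hik.symm hil.symm
  have q4 := hn k l j (fun s => H (1, s) + Real.pi * Complex.I)
    ⟨by fun_prop, fun t => by rw [Complex.exp_add, He, Complex.exp_pi_mul_I]; simp⟩
    hjk.symm hjl.symm
  simp only [ell] at q1 q2 q3 q4
  rw [hlam j k, hlam i k] at q1
  rw [hlam j l, hlam i l] at q2
  have hpi : (Real.pi * Complex.I : ℂ) ≠ 0 := by
    simp [Real.pi_ne_zero, Complex.I_ne_zero]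
  have key : (Real.pi * Complex.I : ℂ) * (((ordSign j k - ordSign k j) + (ordSign k i - ordSign i k)
      + (ordSign l j - ordSign j l) + (ordSign i l - ordSign l i)
        + 2 * (n i j k + n k l j - n i j l - n k l i) : ℤ) : ℂ) = 0 := by
    push_cast
    linear_combination -q1 + q2 + q3 - q4
  have := (mul_eq_zero.1 key).resolve_left hpi
  exact_mod_cast this

theorem no_K5 (pos : Fin 5 → ℂ) (γ : ∀ i j, Path (pos i) (pos j))
    (h : ∀ i j k l, i < j → k < l → i ≠ k → i ≠ l → j ≠ k → j ≠ l → ∀ s t, γ i j s ≠ γ k l t) :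
    False := by
  obtain ⟨n, hn⟩ := exists_winding pos γ
  have H : ∀ i j k l, i < j → k < l → i ≠ k → i ≠ l → j ≠ k → j ≠ l → _ :=
    fun i j k l a b c d e f => hn i j k l c d e f (h i j k l a b c d e f)
  have a1 := H 0 1 2 3 (by decide) (by decide) (by decide) (by decide) (by decide) (by decide)
  have a2 := H 0 2 1 3 (by decide) (by decide) (by decide) (by decide) (by decide) (by decide)
  have a3 := H 0 3 1 2 (by decide) (by decide) (by decide) (by decide) (by decide) (by decide)
  have b1 := H 0 1 2 4 (by decide) (by decide) (by decide) (by decide) (by decide) (by decide)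
  have b2 := H 0 2 1 4 (by decide) (by decide) (by decide) (by decide) (by decide) (by decide)
  have b3 := H 0 4 1 2 (by decide) (by decide) (by decide) (by decide) (by decide) (by decide)
  have c1 := H 0 1 3 4 (by decide) (by decide) (by decide) (by decide) (by decide) (by decide)
  have c2 := H 0 3 1 4 (by decide) (by decide) (by decide) (by decide) (by decide) (by decide)
  have c3 := H 0 4 1 3 (by decide) (by decide) (by decide) (by decide) (by decide) (by decide)
  have d1 := H 0 2 3 4 (by decide) (by decide) (by decide) (by decide) (by decide) (by decide)
  have d2 := H 0 3 2 4 (by decide) (by decide) (by decide) (by decide) (by decide) (by decide)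
  have d3 := H 0 4 2 3 (by decide) (by decide) (by decide) (by decide) (by decide) (by decide)
  have e1 := H 1 2 3 4 (by decide) (by decide) (by decide) (by decide) (by decide) (by decide)
  have e2 := H 1 3 2 4 (by decide) (by decide) (by decide) (by decide) (by decide) (by decide)
  have e3 := H 1 4 2 3 (by decide) (by decide) (by decide) (by decide) (by decide) (by decide)
  simp (decide := true) [ordSign] at *
  omega

theorem no_K33 (pos : Fin 6 → ℂ) (γ : ∀ i j, Path (pos i) (pos j))
    (h : ∀ i j k l, i < 3 → 3 ≤ j → k < 3 → 3 ≤ l → i ≠ k → j ≠ l → ∀ s t, γ i j s ≠ γ k l t) :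
    False := by
  obtain ⟨n, hn⟩ := exists_winding pos γ
  have H : ∀ i j k l : Fin 6, i < 3 → 3 ≤ j → k < 3 → 3 ≤ l → i ≠ k → j ≠ l → _ :=
    fun i j k l a b c d e f => hn i j k l e
      (fun h => by subst h; exact absurd d (not_le.2 a))
      (fun h => by subst h; exact absurd b (not_le.2 c)) f (h i j k l a b c d e f)
  have a1 := H 0 3 1 4 (by decide) (by decide) (by decide) (by decide) (by decide) (by decide)
  have a2 := H 0 3 1 5 (by decide) (by decide) (by decide) (by decide) (by decide) (by decide)
  have a3 := H 0 4 1 3 (by decide) (by decide) (by decide) (by decide) (by decide) (by decide)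
  have a4 := H 0 4 1 5 (by decide) (by decide) (by decide) (by decide) (by decide) (by decide)
  have a5 := H 0 5 1 3 (by decide) (by decide) (by decide) (by decide) (by decide) (by decide)
  have a6 := H 0 5 1 4 (by decide) (by decide) (by decide) (by decide) (by decide) (by decide)
  have b1 := H 0 3 2 4 (by decide) (by decide) (by decide) (by decide) (by decide) (by decide)
  have b2 := H 0 3 2 5 (by decide) (by decide) (by decide) (by decide) (by decide) (by decide)
  have b3 := H 0 4 2 3 (by decide) (by decide) (by decide) (by decide) (by decide) (by decide)
  have b4 := H 0 4 2 5 (by decide) (by decide) (by decide) (by decide) (by decide) (by decide)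
  have b5 := H 0 5 2 3 (by decide) (by decide) (by decide) (by decide) (by decide) (by decide)
  have b6 := H 0 5 2 4 (by decide) (by decide) (by decide) (by decide) (by decide) (by decide)
  have c1 := H 1 3 2 4 (by decide) (by decide) (by decide) (by decide) (by decide) (by decide)
  have c2 := H 1 3 2 5 (by decide) (by decide) (by decide) (by decide) (by decide) (by decide)
  have c3 := H 1 4 2 3 (by decide) (by decide) (by decide) (by decide) (by decide) (by decide)
  have c4 := H 1 4 2 5 (by decide) (by decide) (by decide) (by decide) (by decide) (by decide)
  have c5 := H 1 5 2 3 (by decide) (by decide) (by decide) (by decide) (by decide) (by decide)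
  have c6 := H 1 5 2 4 (by decide) (by decide) (by decide) (by decide) (by decide) (by decide)
  simp (decide := true) [ordSign] at *
  omega

theorem no_K5' (pos : Fin 5 → ℂ) (D : Fin 5 → Fin 5 → Set ℂ)
    (hj : ∀ i j, i < j → JoinedIn (D i j) (pos i) (pos j))
    (h : ∀ i j k l, i < j → k < l → i ≠ k → i ≠ l → j ≠ k → j ≠ l → Disjoint (D i j) (D k l)) :
    False := by
  classical
  have hex : ∀ i j, ∃ γ : Path (pos i) (pos j), i < j → ∀ t, γ t ∈ D i j := by
    intro i j
    by_cases hij : i < j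
    · exact ⟨(hj i j hij).somePath, fun _ t => (hj i j hij).somePath_mem t⟩
    · exact ⟨PathConnectedSpace.somePath _ _, fun h => absurd h hij⟩
  choose γ hγ using hex
  refine no_K5 pos γ fun i j k l a b c d e f s t hst => ?_
  exact Set.disjoint_left.1 (h i j k l a b c d e f) (hγ i j a s) (hst ▸ hγ k l b t)

theorem no_K33' (pos : Fin 6 → ℂ) (D : Fin 6 → Fin 6 → Set ℂ)
    (hj : ∀ i j, i < 3 → 3 ≤ j → JoinedIn (D i j) (pos i) (pos j))
    (h : ∀ i j k l, i < 3 → 3 ≤ j → k < 3 → 3 ≤ l → i ≠ k → j ≠ l → Disjoint (D i j) (D k l)) :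
    False := by
  classical
  have hex : ∀ i j, ∃ γ : Path (pos i) (pos j), i < 3 → 3 ≤ j → ∀ t, γ t ∈ D i j := by
    intro i j
    by_cases hij : i < 3 ∧ 3 ≤ j
    · exact ⟨(hj i j hij.1 hij.2).somePath, fun _ _ t => (hj i j hij.1 hij.2).somePath_mem t⟩
    · exact ⟨PathConnectedSpace.somePath _ _, fun h h' => absurd ⟨h, h'⟩ hij⟩
  choose γ hγ using hex
  refine no_K33 pos γ fun i j k l a b c d e f s t hst => ?_
  exact Set.disjoint_left.1 (h i j k l a b c d e f) (hγ i j a b s) (hst ▸ hγ k l c d t)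

theorem no_K33'' (pos1 pos2 : Fin 3 → ℂ) (D : Fin 3 → Fin 3 → Set ℂ)
    (hj : ∀ i j, JoinedIn (D i j) (pos1 i) (pos2 j))
    (h : ∀ i j k l, i ≠ k → j ≠ l → Disjoint (D i j) (D k l)) :
    False := by
  refine no_K33' (fun i => if i < 3 then pos1 (Fin.ofNat 3 i) else pos2 (Fin.ofNat 3 i))
    (fun i j => D (Fin.ofNat 3 i) (Fin.ofNat 3 j)) ?_ ?_
  · intro i j hi hj'
    simp only [hi, not_lt.2 hj', if_true, if_false]
    exact hj _ _
  · intro i j k l hi hj' hk hl hik hjl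
    apply h
    · revert i k; decide
    · revert j l; decide

/-- A weak drawing of the graph induced on `A`, together with an apex joined to `S`. -/
def Drawn {V : Type*} (A : Finset V) (G : SimpleGraph V) (S : Set V) : Prop :=
  ∃ (pos : V → ℂ) (o : ℂ) (E : V → V → Set ℂ) (F : V → Set ℂ),
    (∀ u ∈ A, ∀ v ∈ A, G.Adj u v → JoinedIn (E u v) (pos u) (pos v)) ∧
    (∀ s ∈ A, s ∈ S → JoinedIn (F s) o (pos s)) ∧
    (∀ u ∈ A, ∀ v ∈ A, ∀ x ∈ A, ∀ y ∈ A, G.Adj u v → G.Adj x y →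
      u ≠ x → u ≠ y → v ≠ x → v ≠ y → Disjoint (E u v) (E x y)) ∧
    (∀ s ∈ A, s ∈ S → ∀ u ∈ A, ∀ v ∈ A, G.Adj u v → s ≠ u → s ≠ v → Disjoint (F s) (E u v))

/-- Connection of `a` and `b` by a walk inside `X`. -/
def Conn {V : Type*} (G : SimpleGraph V) (X : Set V) (a b : V) : Prop :=
  Relation.ReflTransGen (fun x y => G.Adj x y ∧ x ∈ X ∧ y ∈ X) a b

/-- The point set of the part of a drawing inside `X`. -/
def drawSet {V : Type*} (G : SimpleGraph V) (E : V → V → Set ℂ) (X : Set V) : Set ℂ :=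
  {z | ∃ u v, G.Adj u v ∧ u ∈ X ∧ v ∈ X ∧ z ∈ E u v}

theorem Conn.mono {V : Type*} {G : SimpleGraph V} {X Y : Set V} {a b : V}
    (h : Conn G X a b) (hXY : X ⊆ Y) : Conn G Y a b :=
  Relation.ReflTransGen.mono (r := fun x y => G.Adj x y ∧ x ∈ X ∧ y ∈ X)
    (p := fun x y => G.Adj x y ∧ x ∈ Y ∧ y ∈ Y) (fun _ _ h => ⟨h.1, hXY h.2.1, hXY h.2.2⟩) _ _ h

theorem Conn.symm {V : Type*} {G : SimpleGraph V} {X : Set V} {a b : V}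
    (h : Conn G X a b) : Conn G X b a := by
  induction h with
  | refl => exact Relation.ReflTransGen.refl
  | tail _ hbc ih => exact Relation.ReflTransGen.head ⟨hbc.1.symm, hbc.2.2, hbc.2.1⟩ ih

theorem Conn.trans {V : Type*} {G : SimpleGraph V} {X : Set V} {a b c : V}
    (h : Conn G X a b) (h' : Conn G X b c) : Conn G X a c :=
  Relation.ReflTransGen.trans h h'

theorem Conn.edge {V : Type*} {G : SimpleGraph V} {X : Set V} {a b : V}
    (h : G.Adj a b) (ha : a ∈ X) (hb : b ∈ X) : Conn G X a b :=
  Relation.ReflTransGen.single ⟨h, ha, hb⟩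

theorem Conn.joined {V : Type*} {G : SimpleGraph V} {E : V → V → Set ℂ} {X : Set V} {a b : V}
    {pos : V → ℂ} (hE : ∀ u ∈ X, ∀ v ∈ X, G.Adj u v → JoinedIn (E u v) (pos u) (pos v))
    (h : Conn G X a b) (hab : a ≠ b) : JoinedIn (drawSet G E X) (pos a) (pos b) := by
  have key : a = b ∨ JoinedIn (drawSet G E X) (pos a) (pos b) := by
    clear hab
    induction h with
    | refl => exact Or.inl rfl
    | @tail b c hab hbc ih =>
      have hj : JoinedIn (drawSet G E X) (pos b) (pos c) :=
        (hE b hbc.2.1 c hbc.2.2 hbc.1).mono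
          (fun z hz => ⟨b, c, hbc.1, hbc.2.1, hbc.2.2, hz⟩)
      rcases ih with rfl | ih
      · exact Or.inr hj
      · exact Or.inr (ih.trans hj)
  exact key.resolve_left hab

theorem Drawn.no_K5 {V : Type*} {A : Finset V} {G : SimpleGraph V} {S : Set V}
    (hD : Drawn A G S) (d : Fin 4 → V) (X : Fin 4 → Fin 4 → Set V)
    (hd : ∀ i, d i ∈ A ∧ d i ∈ S)
    (hne : ∀ i j, i < j → d i ≠ d j)
    (hX : ∀ i j, i < j → X i j ⊆ A)
    (hc : ∀ i j, i < j → Conn G (X i j) (d i) (d j))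
    (hav : ∀ i j k, i < j → k ≠ i → k ≠ j → d k ∉ X i j)
    (hdis : ∀ i j k l, i < j → k < l → i ≠ k → i ≠ l → j ≠ k → j ≠ l →
      Disjoint (X i j) (X k l)) : False := by
  obtain ⟨pos, o, E, F, hE, hF, hEE, hFE⟩ := hD
  have FX : ∀ i j k, i < j → k ≠ i → k ≠ j → Disjoint (F (d k)) (drawSet G E (X i j)) := by
    intro i j k hij hki hkj
    rw [Set.disjoint_left]
    rintro z hz ⟨u, v, huv, hu, hv, hz'⟩
    refine Set.disjoint_left.1 (hFE (d k) (hd k).1 (hd k).2 u (hX i j hij hu) v (hX i j hij hv)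
      huv ?_ ?_) hz hz'
    · rintro h; exact hav i j k hij hki hkj (h ▸ hu)
    · rintro h; exact hav i j k hij hki hkj (h ▸ hv)
  refine no_K5' (Fin.cases o (fun i => pos (d i)))
    (Fin.cases (Fin.cases ∅ (fun j => F (d j)))
      (fun i => Fin.cases ∅ (fun j => drawSet G E (X i j)))) ?_ ?_
  · intro i j
    refine Fin.cases ?_ (fun i => ?_) i <;> refine Fin.cases ?_ (fun j => ?_) j <;> intro hij
    · exact absurd hij (lt_irrefl _)
    · exact hF _ (hd j).1 (hd j).2
    · exact absurd hij (by simp)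
    · have hij : i < j := by simpa using hij
      exact (hc i j hij).joined (fun u hu v hv => hE u (hX i j hij hu) v (hX i j hij hv))
        (hne i j hij)
  · intro i j k l
    refine Fin.cases ?_ (fun i => ?_) i <;> refine Fin.cases ?_ (fun j => ?_) j <;>
    refine Fin.cases ?_ (fun k => ?_) k <;> refine Fin.cases ?_ (fun l => ?_) l <;>
    intro hij hkl h1 h2 h3 h4 <;>
    first
    | exact absurd rfl h1
    | exact absurd rfl h2
    | exact absurd hij (lt_irrefl _)
    | exact absurd hkl (lt_irrefl _)
    | exact absurd hij (Fin.not_lt_zero _)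
    | exact absurd hkl (Fin.not_lt_zero _)
    | skip
    · have hkl : k < l := by simpa using hkl
      exact FX k l j hkl (by simpa using h3) (by simpa using h4)
    · have hij : i < j := by simpa using hij
      exact (FX i j l hij (by simpa using h2.symm) (by simpa using h4.symm)).symm
    · have hij : i < j := by simpa using hij
      have hkl : k < l := by simpa using hkl
      have hd' := hdis i j k l hij hkl (by simpa using h1) (by simpa using h2)
        (by simpa using h3) (by simpa using h4)
      have hd'' := Set.disjoint_left.1 hd'
      show Disjoint (drawSet G E (X i j)) (drawSet G E (X k l))
      rw [Set.disjoint_left]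
      rintro z ⟨u, v, huv, hu, hv, hz⟩ ⟨x, y, hxy, hx, hy, hz'⟩
      exact Set.disjoint_left.1 (hEE u (hX i j hij hu) v (hX i j hij hv) x (hX k l hkl hx) y
        (hX k l hkl hy) huv hxy
        (fun h => hd'' hu (h ▸ hx)) (fun h => hd'' hu (h ▸ hy))
        (fun h => hd'' hv (h ▸ hx)) (fun h => hd'' hv (h ▸ hy))) hz hz'

theorem Drawn.no_K33 {V : Type*} {A : Finset V} {G : SimpleGraph V} {S : Set V}
    (hD : Drawn A G S) (ρ : Fin 2 → V) (x : Fin 3 → V) (X : Fin 2 → Fin 3 → Set V)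
    (hx : ∀ i, x i ∈ A ∧ x i ∈ S)
    (hne : ∀ i j, ρ i ≠ x j)
    (hX : ∀ i j, X i j ⊆ A)
    (hc : ∀ i j, Conn G (X i j) (ρ i) (x j))
    (hav : ∀ i j k, k ≠ j → x k ∉ X i j)
    (hdis : ∀ j l, j ≠ l → Disjoint (X 0 j) (X 1 l)) : False := by
  obtain ⟨pos, o, E, F, hE, hF, hEE, hFE⟩ := hD
  have FX : ∀ i j k, k ≠ j → Disjoint (F (x k)) (drawSet G E (X i j)) := by
    intro i j k hkj
    rw [Set.disjoint_left]
    rintro z hz ⟨u, v, huv, hu, hv, hz'⟩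
    refine Set.disjoint_left.1 (hFE (x k) (hx k).1 (hx k).2 u (hX i j hu) v (hX i j hv)
      huv ?_ ?_) hz hz'
    · rintro h; exact hav i j k hkj (h ▸ hu)
    · rintro h; exact hav i j k hkj (h ▸ hv)
  have XX : ∀ j l, j ≠ l → Disjoint (drawSet G E (X 0 j)) (drawSet G E (X 1 l)) := by
    intro j l hjl
    have hd'' := Set.disjoint_left.1 (hdis j l hjl)
    rw [Set.disjoint_left]
    rintro z ⟨u, v, huv, hu, hv, hz⟩ ⟨x, y, hxy, hx, hy, hz'⟩
    exact Set.disjoint_left.1 (hEE u (hX 0 j hu) v (hX 0 j hv) x (hX 1 l hx) y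
      (hX 1 l hy) huv hxy
      (fun h => hd'' hu (h ▸ hx)) (fun h => hd'' hu (h ▸ hy))
      (fun h => hd'' hv (h ▸ hx)) (fun h => hd'' hv (h ▸ hy))) hz hz'
  refine no_K33'' (Fin.cases o (fun i => pos (ρ i))) (fun j => pos (x j))
    (Fin.cases (fun j => F (x j)) (fun i j => drawSet G E (X i j))) ?_ ?_
  · intro i j
    refine Fin.cases ?_ (fun i => ?_) i
    · exact hF _ (hx j).1 (hx j).2
    · exact (hc i j).joined (fun u hu v hv => hE u (hX i j hu) v (hX i j hv)) (hne i j)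
  · intro i j k l
    refine Fin.cases ?_ (fun i => ?_) i <;>
    refine Fin.cases ?_ (fun k => ?_) k <;>
    intro h1 h2
    · exact absurd rfl h1
    · exact FX k l j h2
    · exact (FX i j l h2.symm).symm
    · have hik : i ≠ k := by simpa using h1
      show Disjoint (drawSet G E (X i j)) (drawSet G E (X k l))
      have : (i = 0 ∧ k = 1) ∨ (i = 1 ∧ k = 0) := by revert i k; decide
      rcases this with ⟨rfl, rfl⟩ | ⟨rfl, rfl⟩
      · exact XX j l h2
      · exact (XX l j h2.symm).symm

theorem Drawn.mono {V : Type*} {A B : Finset V} {G : SimpleGraph V} {S T : Set V}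
    (hD : Drawn A G S) (hB : B ⊆ A) (hT : ∀ v ∈ B, v ∈ T → v ∈ S) : Drawn B G T := by
  obtain ⟨pos, o, E, F, hE, hF, hEE, hFE⟩ := hD
  exact ⟨pos, o, E, F, fun u hu v hv => hE u (hB hu) v (hB hv),
    fun s hs hs' => hF s (hB hs) (hT s hs hs'),
    fun u hu v hv x hx y hy => hEE u (hB hu) v (hB hv) x (hB hx) y (hB hy),
    fun s hs hs' u hu v hv => hFE s (hB hs) (hT s hs hs') u (hB hu) v (hB hv)⟩

theorem Drawn.delete {V : Type*} {A B : Finset V} {G : SimpleGraph V} {S : Set V}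
    (hD : Drawn A G S) (P : Set V) (hP : ∀ v ∈ P, v ∈ A ∧ v ∈ S) (hB : B ⊆ A)
    (hBP : ∀ v ∈ B, v ∉ P) :
    Drawn B G (S ∪ {x | ∃ w ∈ P, G.Adj w x}) := by
  classical
  obtain ⟨pos, o, E, F, hE, hF, hEE, hFE⟩ := hD
  have hch : ∀ x, ∃ Fx : Set ℂ, x ∈ B → x ∈ S ∪ {x | ∃ w ∈ P, G.Adj w x} →
      JoinedIn Fx o (pos x) ∧ ∀ u ∈ B, ∀ v ∈ B, G.Adj u v → x ≠ u → x ≠ v →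
        Disjoint Fx (E u v) := by
    intro x
    by_cases hx : x ∈ S
    · exact ⟨F x, fun hxB _ => ⟨hF x (hB hxB) hx, fun u hu v hv =>
        hFE x (hB hxB) hx u (hB hu) v (hB hv)⟩⟩
    by_cases hx' : ∃ w ∈ P, G.Adj w x
    · obtain ⟨w, hw, hwx⟩ := hx'
      refine ⟨F w ∪ E w x, fun hxB _ => ⟨?_, ?_⟩⟩
      · exact ((hF w (hP w hw).1 (hP w hw).2).mono subset_union_left).trans
          ((hE w (hP w hw).1 x (hB hxB) hwx).mono subset_union_right)
      · intro u hu v hv huv hxu hxv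
        have hwu : w ≠ u := fun h => hBP u hu (h ▸ hw)
        have hwv : w ≠ v := fun h => hBP v hv (h ▸ hw)
        exact Set.disjoint_union_left.2
          ⟨hFE w (hP w hw).1 (hP w hw).2 u (hB hu) v (hB hv) huv hwu hwv,
            hEE w (hP w hw).1 x (hB hxB) u (hB hu) v (hB hv) hwx huv hwu hwv hxu hxv⟩
    · exact ⟨∅, fun _ h => by rcases h with h | h <;> [exact absurd h hx; exact absurd h hx']⟩
  choose F' hF' using hch
  exact ⟨pos, o, E, F', fun u hu v hv => hE u (hB hu) v (hB hv),
    fun s hs hs' => (hF' s hs hs').1,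
    fun u hu v hv x hx y hy => hEE u (hB hu) v (hB hv) x (hB hx) y (hB hy),
    fun s hs hs' => (hF' s hs hs').2⟩

theorem Drawn.refocus {V : Type*} {A B : Finset V} {G : SimpleGraph V} {S : Set V}
    (hD : Drawn A G S) (v : V) (hv : v ∈ A) (hB : B ⊆ A) (hvB : v ∉ B) :
    Drawn B G {x | G.Adj v x} := by
  obtain ⟨pos, o, E, F, hE, hF, hEE, hFE⟩ := hD
  exact ⟨pos, pos v, E, fun x => E v x, fun u hu v hv => hE u (hB hu) v (hB hv),
    fun s hs hs' => hE v hv s (hB hs) hs',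
    fun u hu v hv x hx y hy => hEE u (hB hu) v (hB hv) x (hB hx) y (hB hy),
    fun s hs hs' u hu w hw huw h1 h2 => hEE v hv s (hB hs) u (hB hu) w (hB hw) hs' huw
      (fun h => hvB (h ▸ hu)) (fun h => hvB (h ▸ hw)) h1 h2⟩

theorem joinedIn_far {R : ℝ} (hR : 0 ≤ R) {a b : ℝ × ℝ} (ha : R < ‖a‖) (hb : R < ‖b‖) :
    JoinedIn {x : ℝ × ℝ | R < ‖x‖} a b := by
  have hrank : 1 < Module.rank ℝ (ℝ × ℝ) := by
    simp only [rank_prod', Module.rank_self]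
    norm_num
  have h1 := isPathConnected_sphere hrank (0 : ℝ × ℝ) (zero_le_one (α := ℝ))
  have h2 : IsPathConnected (Ioi R) := (convex_Ioi R).isPathConnected nonempty_Ioi
  have h3 := (h2.prod h1).image (f := fun q : ℝ × (ℝ × ℝ) => q.1 • q.2) (by fun_prop)
  have hmem : ∀ x : ℝ × ℝ, R < ‖x‖ →
      x ∈ (fun q : ℝ × (ℝ × ℝ) => q.1 • q.2) '' (Ioi R ×ˢ Metric.sphere (0 : ℝ × ℝ) 1) := by
    intro x hx
    have hx0 : ‖x‖ ≠ 0 := (lt_of_le_of_lt hR hx).ne'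
    refine ⟨(‖x‖, ‖x‖⁻¹ • x), ⟨hx, ?_⟩, ?_⟩
    · simp [norm_smul, hx0]
    · simp [smul_smul, hx0]
  refine (h3.joinedIn a (hmem a ha) b (hmem b hb)).mono ?_
  rintro _ ⟨⟨t, x⟩, ⟨ht, hx⟩, rfl⟩
  have hx : ‖x‖ = 1 := by simpa using hx
  have ht : R < t := ht
  simp only [mem_setOf_eq, norm_smul, hx, mul_one, Real.norm_eq_abs]
  exact lt_of_lt_of_le ht (le_abs_self t)

namespace PlaneGraph

variable {V : Type*}

theorem arc_compact (G : PlaneGraph V) {u v : V} (h : G.Adj u v) : IsCompact (G.arc s(u, v)) := by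
  obtain ⟨f, hf, -, hi, -⟩ := G.arc_arc u v h
  rw [← hi]
  exact isCompact_Icc.image_of_continuousOn hf

theorem arc_joined (G : PlaneGraph V) {u v : V} (h : G.Adj u v) :
    JoinedIn (G.arc s(u, v)) (G.pos u) (G.pos v) := by
  obtain ⟨f, hf, -, hi, h0, h1⟩ := G.arc_arc u v h
  exact JoinedIn.ofLine hf h0 h1 hi.le

theorem arcs_compact (G : PlaneGraph V) (P : V → V → Prop) :
    IsCompact (⋃ (u : V) (v : V) (_ : G.Adj u v ∧ P u v), G.arc s(u, v)) := by
  have hfin : ({q : V × V | G.Adj q.1 q.2 ∧ P q.1 q.2}).Finite :=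
    (G.finite_verts.prod G.finite_verts).subset
      (fun q hq => ⟨G.adj_mem _ _ hq.1, G.adj_mem _ _ (G.adj_symm _ _ hq.1)⟩)
  have := hfin.isCompact_biUnion (f := fun q : V × V => G.arc s(q.1, q.2))
    (fun q hq => G.arc_compact hq.1)
  convert this using 1
  ext z
  simp only [mem_iUnion, mem_setOf_eq, exists_prop, Prod.exists]

theorem image_compact (G : PlaneGraph V) : IsCompact G.image := by
  refine (G.finite_verts.image _).isCompact.union ?_
  simpa using G.arcs_compact (fun _ _ => True)

theorem outer_joined (G : PlaneGraph V) {a b : ℝ × ℝ} (ha : a ∈ G.outerFace)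
    (hb : b ∈ G.outerFace) : JoinedIn G.imageᶜ a b := by
  obtain ⟨R, hR⟩ := G.image_compact.isBounded.subset_closedBall (0 : ℝ × ℝ)
  have hopen : IsOpen G.imageᶜ := G.image_compact.isClosed.isOpen_compl
  have key : ∀ x ∈ G.outerFace, ∃ y, max R 0 < ‖y‖ ∧ JoinedIn G.imageᶜ x y := by
    rintro x ⟨hx, hub⟩
    have hc : IsPathConnected (connectedComponentIn G.imageᶜ x) :=
      (hopen.connectedComponentIn.isConnected_iff_isPathConnected).1
        (isConnected_connectedComponentIn_iff.2 hx)
    by_contra hcon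
    push Not at hcon
    apply hub
    refine (Metric.isBounded_closedBall (x := (0 : ℝ × ℝ)) (r := max R 0)).subset ?_
    intro y hy
    rw [mem_closedBall_zero_iff]
    by_contra hlt
    exact hcon y (not_le.1 hlt) ((hc.joinedIn x (mem_connectedComponentIn hx) y hy).mono
      (connectedComponentIn_subset _ _))
  obtain ⟨a', ha', haa⟩ := key a ha
  obtain ⟨b', hb', hbb⟩ := key b hb
  refine haa.trans (((joinedIn_far (le_max_right R 0) ha' hb').mono ?_).trans hbb.symm)
  intro x hx hxi
  have := hR hxi
  rw [mem_closedBall_zero_iff] at this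
  exact absurd hx (not_lt.2 (this.trans (le_max_left _ _)))

/-- The underlying simple graph. -/
def toSG (G : PlaneGraph V) : SimpleGraph V where
  Adj := G.Adj
  symm := ⟨fun u v h => G.adj_symm u v h⟩
  loopless := ⟨fun v h => G.adj_irrefl v h⟩

theorem drawn (G : PlaneGraph V) (C : List V) (hC : G.IsOuterCycle C) :
    Drawn G.finite_verts.toFinset G.toSG {v | v ∈ C} := by
  classical
  obtain ⟨-, hlen, hmem, -, hfr⟩ := hC
  have hcl : ∀ s ∈ C, G.pos s ∈ closure G.outerFace := by
    intro s hs
    apply frontier_subset_closure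
    rw [hfr]
    exact Or.inl ⟨s, hs, rfl⟩
  obtain ⟨o, ho⟩ : G.outerFace.Nonempty := by
    have h0 : C[0] ∈ C := List.getElem_mem _
    exact closure_nonempty_iff.1 ⟨_, hcl _ h0⟩
  have hF : ∀ s, ∃ F : Set (ℝ × ℝ), s ∈ C → JoinedIn F o (G.pos s) ∧
      ∀ u v, G.Adj u v → s ≠ u → s ≠ v → Disjoint F (G.arc s(u, v)) := by
    intro s
    by_cases hs : s ∈ C
    swap
    · exact ⟨∅, fun h => absurd h hs⟩
    have hK := (G.arcs_compact (fun u v => s ≠ u ∧ s ≠ v)).isClosed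
    have hnot : G.pos s ∈ (⋃ (u : V) (v : V) (_ : G.Adj u v ∧ s ≠ u ∧ s ≠ v), G.arc s(u, v))ᶜ := by
      simp only [mem_compl_iff, mem_iUnion, not_exists]
      rintro u v ⟨huv, h1, h2⟩ hm
      rcases G.arc_avoid u v huv s (hmem s hs) hm with h | h
      · exact h1 h
      · exact h2 h
    obtain ⟨ε, hε, hball⟩ := Metric.isOpen_iff.1 hK.isOpen_compl _ hnot
    obtain ⟨z, hz, hdz⟩ := Metric.mem_closure_iff.1 (hcl s hs) ε hε
    refine ⟨G.imageᶜ ∪ Metric.ball (G.pos s) ε, fun _ => ⟨?_, ?_⟩⟩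
    · refine ((G.outer_joined ho hz).mono subset_union_left).trans
        (JoinedIn.mono ?_ subset_union_right)
      exact (Metric.isPathConnected_ball hε).joinedIn z
        (by rw [Metric.mem_ball, dist_comm]; exact hdz) _ (Metric.mem_ball_self hε)
    · intro u v huv h1 h2
      rw [Set.disjoint_union_left]
      constructor
      · rw [Set.disjoint_left]
        intro x hx hxa
        exact hx (Or.inr (mem_iUnion.2 ⟨u, mem_iUnion.2 ⟨v, mem_iUnion.2 ⟨huv, hxa⟩⟩⟩))
      · rw [Set.disjoint_left]
        intro x hx hxa
        exact hball hx (mem_iUnion.2 ⟨u, mem_iUnion.2 ⟨v, mem_iUnion.2 ⟨⟨huv, h1, h2⟩, hxa⟩⟩⟩)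
  choose F hF using hF
  let e := Complex.equivRealProdCLM.symm
  have he : Continuous e := e.continuous
  have hei : Function.Injective e := e.injective
  refine ⟨fun v => e (G.pos v), e o, fun u v => e '' G.arc s(u, v), fun s => e '' F s, ?_, ?_, ?_, ?_⟩
  · intro u _ v _ huv
    exact (G.arc_joined huv).map he
  · intro s _ hs
    exact ((hF s hs).1).map he
  · intro u _ v _ x _ y _ huv hxy h1 h2 h3 h4
    rw [Set.disjoint_image_iff hei, Set.disjoint_left]
    intro z hz hz'
    have hne : s(u, v) ≠ s(x, y) := by
      intro h
      rcases Sym2.eq_iff.1 h with h | h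
      · exact h1 h.1
      · exact h2 h.1
    obtain ⟨w, ⟨hw1, hw2⟩, -⟩ := G.arc_meet u v x y huv hxy hne ⟨hz, hz'⟩
    rcases hw1 with rfl | rfl <;> rcases hw2 with rfl | rfl <;> contradiction
  · intro s _ hs u _ v _ huv h1 h2
    rw [Set.disjoint_image_iff hei]
    exact (hF s hs).2 u v huv h1 h2

end PlaneGraph

section Combi

variable {V : Type*} [DecidableEq V] {G : SimpleGraph V}

/-- A separation of `A` along the edge `uv` between vertices of `S`. -/
structure GSep (A : Finset V) (G : SimpleGraph V) (S : Set V) (u v : V) (A1 A2 : Finset V) :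
    Prop where
  hu : u ∈ S
  hv : v ∈ S
  adj : G.Adj u v
  un : A1 ∪ A2 = A
  int : A1 ∩ A2 = {u, v}
  c1 : A1.card < A.card
  c2 : A2.card < A.card
  cross : ∀ a ∈ A1, ∀ b ∈ A2, G.Adj a b → a ∈ A2 ∨ b ∈ A1

theorem GSep.symm {A : Finset V} {S : Set V} {u v : V} {A1 A2 : Finset V}
    (h : GSep A G S u v A1 A2) : GSep A G S u v A2 A1 where
  hu := h.hu
  hv := h.hv
  adj := h.adj
  un := by rw [Finset.union_comm, h.un]
  int := by rw [Finset.inter_comm, h.int]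
  c1 := h.c2
  c2 := h.c1
  cross := fun a ha b hb hab => (h.cross b hb a ha hab.symm).symm

theorem GSep.swap {A : Finset V} {S : Set V} {u v : V} {A1 A2 : Finset V}
    (h : GSep A G S u v A1 A2) : GSep A G S v u A1 A2 where
  hu := h.hv
  hv := h.hu
  adj := h.adj.symm
  un := h.un
  int := by rw [h.int, Finset.pair_comm]
  c1 := h.c1
  c2 := h.c2
  cross := h.cross

theorem GSep.sub1 {A : Finset V} {S : Set V} {u v : V} {A1 A2 : Finset V}
    (h : GSep A G S u v A1 A2) : A1 ⊆ A := h.un ▸ Finset.subset_union_left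

theorem GSep.sub2 {A : Finset V} {S : Set V} {u v : V} {A1 A2 : Finset V}
    (h : GSep A G S u v A1 A2) : A2 ⊆ A := h.un ▸ Finset.subset_union_right

theorem GSep.mem_or {A : Finset V} {S : Set V} {u v : V} {A1 A2 : Finset V}
    (h : GSep A G S u v A1 A2) {x : V} (hx : x ∈ A) : x ∈ A1 ∨ x ∈ A2 :=
  Finset.mem_union.1 (h.un ▸ hx)

theorem GSep.both {A : Finset V} {S : Set V} {u v : V} {A1 A2 : Finset V}
    (h : GSep A G S u v A1 A2) {x : V} (h1 : x ∈ A1) (h2 : x ∈ A2) : x = u ∨ x = v := by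
  have : x ∈ A1 ∩ A2 := Finset.mem_inter.2 ⟨h1, h2⟩
  rw [h.int] at this
  simpa using this

theorem GSep.u1 {A : Finset V} {S : Set V} {u v : V} {A1 A2 : Finset V}
    (h : GSep A G S u v A1 A2) : u ∈ A1 ∧ u ∈ A2 := by
  have : u ∈ A1 ∩ A2 := by rw [h.int]; simp
  exact Finset.mem_inter.1 this

theorem GSep.v1 {A : Finset V} {S : Set V} {u v : V} {A1 A2 : Finset V}
    (h : GSep A G S u v A1 A2) : v ∈ A1 ∧ v ∈ A2 := h.swap.u1

theorem GSep.edge {A : Finset V} {S : Set V} {u v : V} {A1 A2 : Finset V}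
    (h : GSep A G S u v A1 A2) {x y : V} (hx : x ∈ A) (hy : y ∈ A) (hxy : G.Adj x y) :
    (x ∈ A1 ∧ y ∈ A1) ∨ (x ∈ A2 ∧ y ∈ A2) := by
  have c1 := h.cross x
  have c2 := h.cross y
  have c3 := c2
  rcases h.mem_or hx with hx | hx <;> rcases h.mem_or hy with hy | hy
  · exact Or.inl ⟨hx, hy⟩
  · rcases c1 hx y hy hxy with h | h
    · exact Or.inr ⟨h, hy⟩
    · exact Or.inl ⟨hx, h⟩
  · rcases c2 hy x hx hxy.symm with h | h
    · exact Or.inr ⟨hx, h⟩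
    · exact Or.inl ⟨h, hy⟩
  · exact Or.inr ⟨hx, hy⟩

/-- No separation exists. -/
def NoSep (A : Finset V) (G : SimpleGraph V) (S : Set V) : Prop :=
  ∀ u v A1 A2, ¬ GSep A G S u v A1 A2

theorem NoSep.conn {A : Finset V} {S : Set V} (h : NoSep A G S) {u v a b : V}
    (hu : u ∈ A) (hv : v ∈ A) (huS : u ∈ S) (hvS : v ∈ S) (huv : G.Adj u v)
    (ha : a ∈ A) (hau : a ≠ u) (hav : a ≠ v) (hb : b ∈ A) (hbu : b ≠ u) (hbv : b ≠ v) :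
    Conn G {x | x ∈ A ∧ x ≠ u ∧ x ≠ v} a b := by
  classical
  by_contra hcon
  let X : Set V := {x | x ∈ A ∧ x ≠ u ∧ x ≠ v}
  let A1 := A.filter (fun x => x = u ∨ x = v ∨ Conn G X a x)
  let A2 := A.filter (fun x => x = u ∨ x = v ∨ ¬ Conn G X a x)
  have haa : Conn G X a a := Relation.ReflTransGen.refl
  refine h u v A1 A2 ⟨huS, hvS, huv, ?_, ?_, ?_, ?_, ?_⟩
  · ext x; simp only [A1, A2, Finset.mem_union, Finset.mem_filter]; tauto
  · ext x
    simp only [A1, A2, Finset.mem_inter, Finset.mem_filter, Finset.mem_insert,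
      Finset.mem_singleton]
    constructor
    · tauto
    · rintro (rfl | rfl) <;> tauto
  · apply Finset.card_lt_card
    refine Finset.ssubset_iff_subset_ne.2 ⟨Finset.filter_subset _ _, fun he => ?_⟩
    have : b ∈ A1 := he ▸ hb
    simp only [A1, Finset.mem_filter] at this
    tauto
  · apply Finset.card_lt_card
    refine Finset.ssubset_iff_subset_ne.2 ⟨Finset.filter_subset _ _, fun he => ?_⟩
    have : a ∈ A2 := he ▸ ha
    simp only [A2, Finset.mem_filter] at this
    tauto
  · intro x hx y hy hxy
    simp only [A1, A2, Finset.mem_filter] at hx hy ⊢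
    by_cases h1 : x = u
    · tauto
    by_cases h2 : x = v
    · tauto
    by_cases h3 : y = u
    · tauto
    by_cases h4 : y = v
    · tauto
    have hx' : Conn G X a x := by tauto
    have : Conn G X a y := hx'.trans (Conn.edge hxy ⟨hx.1, h1, h2⟩ ⟨hy.1, h3, h4⟩)
    tauto

theorem Drawn.K5 {A : Finset V} {S : Set V} (hD : Drawn A G S) {d0 d1 d2 d3 : V}
    {X01 X02 X03 X12 X13 X23 : Set V}
    (h0 : d0 ∈ A ∧ d0 ∈ S) (h1 : d1 ∈ A ∧ d1 ∈ S) (h2 : d2 ∈ A ∧ d2 ∈ S) (h3 : d3 ∈ A ∧ d3 ∈ S)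
    (n01 : d0 ≠ d1) (n02 : d0 ≠ d2) (n03 : d0 ≠ d3) (n12 : d1 ≠ d2) (n13 : d1 ≠ d3)
    (n23 : d2 ≠ d3)
    (s01 : X01 ⊆ A) (s02 : X02 ⊆ A) (s03 : X03 ⊆ A) (s12 : X12 ⊆ A) (s13 : X13 ⊆ A)
    (s23 : X23 ⊆ A)
    (c01 : Conn G X01 d0 d1) (c02 : Conn G X02 d0 d2) (c03 : Conn G X03 d0 d3)
    (c12 : Conn G X12 d1 d2) (c13 : Conn G X13 d1 d3) (c23 : Conn G X23 d2 d3)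
    (a01 : d2 ∉ X01 ∧ d3 ∉ X01) (a02 : d1 ∉ X02 ∧ d3 ∉ X02) (a03 : d1 ∉ X03 ∧ d2 ∉ X03)
    (a12 : d0 ∉ X12 ∧ d3 ∉ X12) (a13 : d0 ∉ X13 ∧ d2 ∉ X13) (a23 : d0 ∉ X23 ∧ d1 ∉ X23)
    (e1 : Disjoint X01 X23) (e2 : Disjoint X02 X13) (e3 : Disjoint X03 X12) : False := by
  refine hD.no_K5 ![d0, d1, d2, d3]
    ![![∅, X01, X02, X03], ![∅, ∅, X12, X13], ![∅, ∅, ∅, X23], ![∅, ∅, ∅, ∅]] ?_ ?_ ?_ ?_ ?_ ?_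
  · simp only [Fin.forall_fin_succ, Fin.forall_fin_zero_pi]
    simp [h0, h1, h2, h3]
  · intro i j hij
    fin_cases i <;> fin_cases j <;> first | exact absurd hij (by decide) | simp [*]
  · intro i j hij
    fin_cases i <;> fin_cases j <;> first | exact absurd hij (by decide) | simp [*]
  · intro i j hij
    fin_cases i <;> fin_cases j <;> first | exact absurd hij (by decide) | simp [*]
  · intro i j k hij h1 h2
    fin_cases i <;> fin_cases j <;> first
      | exact absurd hij (by decide)
      | (fin_cases k <;> first
          | exact absurd rfl h1
          | exact absurd rfl h2
          | simp [*])
  · intro i j k l hij hkl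
    fin_cases i <;> fin_cases j <;> first
      | exact absurd hij (by decide)
      | (fin_cases k <;> fin_cases l <;> first
          | exact absurd hkl (by decide)
          | (intro q1 q2 q3 q4; first
              | exact absurd rfl q1
              | exact absurd rfl q2
              | exact absurd rfl q3
              | exact absurd rfl q4
              | simpa using e1
              | simpa using e2
              | simpa using e3
              | simpa using e1.symm
              | simpa using e2.symm
              | simpa using e3.symm))

theorem Drawn.K33 {A : Finset V} {S : Set V} (hD : Drawn A G S) {q0 q1 x0 x1 x2 : V}
    {X0 X1 X2 Y0 Y1 Y2 : Set V}
    (h0 : x0 ∈ A ∧ x0 ∈ S) (h1 : x1 ∈ A ∧ x1 ∈ S) (h2 : x2 ∈ A ∧ x2 ∈ S)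
    (n0 : q0 ≠ x0 ∧ q0 ≠ x1 ∧ q0 ≠ x2) (n1 : q1 ≠ x0 ∧ q1 ≠ x1 ∧ q1 ≠ x2)
    (sX0 : X0 ⊆ A) (sX1 : X1 ⊆ A) (sX2 : X2 ⊆ A) (sY0 : Y0 ⊆ A) (sY1 : Y1 ⊆ A) (sY2 : Y2 ⊆ A)
    (c0 : Conn G X0 q0 x0) (c1 : Conn G X1 q0 x1) (c2 : Conn G X2 q0 x2)
    (d0 : Conn G Y0 q1 x0) (d1 : Conn G Y1 q1 x1) (d2 : Conn G Y2 q1 x2)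
    (a0 : x1 ∉ X0 ∧ x2 ∉ X0) (a1 : x0 ∉ X1 ∧ x2 ∉ X1) (a2 : x0 ∉ X2 ∧ x1 ∉ X2)
    (b0 : x1 ∉ Y0 ∧ x2 ∉ Y0) (b1 : x0 ∉ Y1 ∧ x2 ∉ Y1) (b2 : x0 ∉ Y2 ∧ x1 ∉ Y2)
    (e01 : Disjoint X0 Y1) (e02 : Disjoint X0 Y2) (e10 : Disjoint X1 Y0) (e12 : Disjoint X1 Y2)
    (e20 : Disjoint X2 Y0) (e21 : Disjoint X2 Y1) : False := by
  refine hD.no_K33 ![q0, q1] ![x0, x1, x2] ![![X0, X1, X2], ![Y0, Y1, Y2]] ?_ ?_ ?_ ?_ ?_ ?_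
  · intro i
    fin_cases i <;> simp [*]
  · intro i j
    fin_cases i <;> fin_cases j <;> simp [*]
  · intro i j
    fin_cases i <;> fin_cases j <;> simp [*]
  · intro i j
    fin_cases i <;> fin_cases j <;> simp [*]
  · intro i j k hk
    fin_cases i <;> fin_cases j <;> fin_cases k <;> first | exact absurd rfl hk | simp [*]
  · intro j l hjl
    fin_cases j <;> fin_cases l <;> first | exact absurd rfl hjl | simp [*]

theorem deg_le {A : Finset V} {S : Set V} (hD : Drawn A G S) (hN : NoSep A G S)
    {s t1 t2 t3 : V} (hs : s ∈ A ∧ s ∈ S) (h1 : t1 ∈ A ∧ t1 ∈ S) (h2 : t2 ∈ A ∧ t2 ∈ S)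
    (h3 : t3 ∈ A ∧ t3 ∈ S) (a1 : G.Adj s t1) (a2 : G.Adj s t2) (a3 : G.Adj s t3)
    (n12 : t1 ≠ t2) (n13 : t1 ≠ t3) (n23 : t2 ≠ t3) : False := by
  have e : ∀ {t}, G.Adj s t → t ∈ A → ({s, t} : Set V) ⊆ A := by
    rintro t - ht x (rfl | rfl)
    · exact hs.1
    · exact ht
  refine hD.K5 (X01 := {s, t1}) (X02 := {s, t2}) (X03 := {s, t3}) hs h1 h2 h3 a1.ne a2.ne a3.ne
    n12 n13 n23 (e a1 h1.1) (e a2 h2.1) (e a3 h3.1)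
    (fun x hx => hx.1) (fun x hx => hx.1) (fun x hx => hx.1)
    (Conn.edge a1 (by simp) (by simp)) (Conn.edge a2 (by simp) (by simp))
    (Conn.edge a3 (by simp) (by simp))
    (hN.conn hs.1 h3.1 hs.2 h3.2 a3 h1.1 a1.ne.symm n13 h2.1 a2.ne.symm n23)
    (hN.conn hs.1 h2.1 hs.2 h2.2 a2 h1.1 a1.ne.symm n12 h3.1 a3.ne.symm n23.symm)
    (hN.conn hs.1 h1.1 hs.2 h1.2 a1 h2.1 a2.ne.symm n12.symm h3.1 a3.ne.symm n13.symm)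
    ?_ ?_ ?_ ?_ ?_ ?_ ?_ ?_ ?_
  · simp [n12.symm, n13.symm, a2.ne.symm, a3.ne.symm]
  · simp [n12, n23.symm, a1.ne.symm, a3.ne.symm]
  · simp [n13, n23, a1.ne.symm, a2.ne.symm]
  · simp
  · simp
  · simp
  · rw [Set.disjoint_left]; rintro x (rfl | rfl) <;> simp
  · rw [Set.disjoint_left]; rintro x (rfl | rfl) <;> simp
  · rw [Set.disjoint_left]; rintro x (rfl | rfl) <;> simp

/-- A path of `G` given by an enumeration of its `m` vertices. -/
structure GPath (G : SimpleGraph V) (w : ℕ → V) (m : ℕ) : Prop where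
  inj : ∀ i < m, ∀ j < m, w i = w j → i = j
  adj : ∀ i, i + 1 < m → G.Adj (w i) (w (i + 1))

theorem GPath.seg {w : ℕ → V} {n : ℕ} (h : GPath G w n) {i j : ℕ} (hij : i ≤ j) (hj : j < n) :
    Conn G {x | ∃ k, i ≤ k ∧ k ≤ j ∧ w k = x} (w i) (w j) := by
  induction j, hij using Nat.le_induction with
  | base => exact Relation.ReflTransGen.refl
  | succ j hij ih =>
    refine Conn.trans ((ih (by omega)).mono ?_) (Conn.edge (h.adj j hj) ?_ ?_)
    · rintro x ⟨k, h1, h2, h3⟩; exact ⟨k, h1, by omega, h3⟩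
    · exact ⟨j, hij, by omega, rfl⟩
    · exact ⟨j + 1, by omega, le_rfl, rfl⟩

theorem first_hit {X D : Set V} {r b : V} (h : Conn G X r b) (hr : r ∉ D) (hb : b ∈ D) :
    ∃ d ∈ D, d ∈ X ∧ Conn G {x | (x ∈ X ∧ x ∉ D) ∨ x = d} r d := by
  induction h using Relation.ReflTransGen.head_induction_on with
  | refl => exact absurd hb hr
  | @head r r' hrr _ ih =>
    by_cases hr' : r' ∈ D
    · exact ⟨r', hr', hrr.2.2, Conn.edge hrr.1 (Or.inl ⟨hrr.2.1, hr⟩) (Or.inr rfl)⟩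
    · obtain ⟨d, hd, hdX, hc⟩ := ih hr'
      exact ⟨d, hd, hdX, (Conn.edge hrr.1 (Or.inl ⟨hrr.2.1, hr⟩) (Or.inl ⟨hrr.2.2, hr'⟩)).trans hc⟩

theorem cyc_aux {A : Finset V} {S : Set V} (hD : Drawn A G S) (hN : NoSep A G S)
    {w : ℕ → V} {n : ℕ} (hn : 3 ≤ n) (hw : GPath G w n) (hcl : G.Adj (w (n - 1)) (w 0))
    (hS : ∀ i < n, w i ∈ A ∧ w i ∈ S) {r : V} (hr : r ∈ A ∧ r ∈ S) (hrw : ∀ i < n, w i ≠ r)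
    (h0 : Conn G {x | (x ∈ A ∧ ∀ i < n, w i ≠ x) ∨ x = w 0} r (w 0)) : False := by
  have hit : ∀ i j k, i < n → j < n → k < n → k ≠ i → k ≠ j → G.Adj (w i) (w j) →
      ∃ l < n, l ≠ i ∧ l ≠ j ∧ Conn G {x | (x ∈ A ∧ ∀ i < n, w i ≠ x) ∨ x = w l} r (w l) := by
    intro i j k hi hj hk hki hkj hij
    have hc := hN.conn (hS i hi).1 (hS j hj).1 (hS i hi).2 (hS j hj).2 hij hr.1 (hrw i hi).symm
      (hrw j hj).symm (hS k hk).1 (fun h => hki (hw.inj _ hk _ hi h))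
      (fun h => hkj (hw.inj _ hk _ hj h))
    obtain ⟨d, ⟨l, hl, rfl⟩, ⟨-, hd1, hd2⟩, hc⟩ := first_hit (D := {x | ∃ l < n, w l = x}) hc
      (by rintro ⟨l, hl, h⟩; exact hrw l hl h) ⟨k, hk, rfl⟩
    refine ⟨l, hl, fun h => hd1 (h ▸ rfl), fun h => hd2 (h ▸ rfl), hc.mono ?_⟩
    rintro x (⟨⟨hxA, -⟩, hx⟩ | hx)
    · exact Or.inl ⟨hxA, fun i hi he => hx ⟨i, hi, he⟩⟩
    · exact Or.inr hx
  have hinj : ∀ {i j}, i < n → j < n → i ≠ j → w i ≠ w j := fun hi hj hij h =>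
    hij (hw.inj _ hi _ hj h)
  have sub2 : ∀ {i j}, i < n → j < n → ({w i, w j} : Set V) ⊆ A := by
    rintro i j hi hj x (rfl | rfl)
    · exact (hS i hi).1
    · exact (hS j hj).1
  have subH : ∀ {l}, l < n → {x | (x ∈ A ∧ ∀ i < n, w i ≠ x) ∨ x = w l} ⊆ (A : Set V) := by
    rintro l hl x (hx | rfl)
    · exact hx.1
    · exact (hS l hl).1
  have subG : ∀ {i j}, j < n → {x | ∃ k, i ≤ k ∧ k ≤ j ∧ w k = x} ⊆ (A : Set V) := by
    rintro i j hj x ⟨k, h1, h2, rfl⟩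
    exact (hS k (by omega)).1
  have a01 : G.Adj (w 0) (w 1) := hw.adj 0 (by omega)
  have nH : ∀ {i l}, i < n → l < n → i ≠ l →
      w i ∉ {x | (x ∈ A ∧ ∀ i < n, w i ≠ x) ∨ x = w l} := by
    rintro i l hi hl hil (⟨-, hx⟩ | hx)
    · exact hx i hi rfl
    · exact hinj hi hl hil hx
  have nG : ∀ {i j l}, j < n → l < n → (l < i ∨ j < l) →
      w l ∉ {x | ∃ k, i ≤ k ∧ k ≤ j ∧ w k = x} := by
    rintro i j l hj hl hil ⟨k, h1, h2, h3⟩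
    exact hinj (by omega) hl (by omega) h3
  have rG : ∀ {i j}, j < n → r ∉ {x | ∃ k, i ≤ k ∧ k ≤ j ∧ w k = x} := by
    rintro i j hj ⟨k, h1, h2, h3⟩
    exact hrw k (by omega) h3
  have r2 : ∀ {i j}, i < n → j < n → r ∉ ({w i, w j} : Set V) := by
    rintro i j hi hj (h | h)
    · exact hrw i hi h.symm
    · exact hrw j hj h.symm
  have n2 : ∀ {i j l}, i < n → j < n → l < n → l ≠ i → l ≠ j → w l ∉ ({w i, w j} : Set V) := by
    rintro i j l hi hj hl h1 h2 (h | h)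
    · exact hinj hl hi h1 h
    · exact hinj hl hj h2 h
  have d2G : ∀ {i j a b}, i < n → j < n → b < n → (i < a ∨ b < i) → (j < a ∨ b < j) →
      Disjoint ({w i, w j} : Set V) {x | ∃ k, a ≤ k ∧ k ≤ b ∧ w k = x} := by
    intro i j a b hi hj hb h1 h2
    rw [Set.disjoint_left]
    rintro x (rfl | rfl)
    · exact nG hb hi h1
    · exact nG hb hj h2
  have d2H : ∀ {i j l}, i < n → j < n → l < n → i ≠ l → j ≠ l →
      Disjoint ({w i, w j} : Set V) {x | (x ∈ A ∧ ∀ i < n, w i ≠ x) ∨ x = w l} := by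
    intro i j l hi hj hl h1 h2
    rw [Set.disjoint_left]
    rintro x (rfl | rfl)
    · exact nH hi hl h1
    · exact nH hj hl h2
  have dHG : ∀ {l a b}, l < n → b < n → (l < a ∨ b < l) →
      Disjoint {x | (x ∈ A ∧ ∀ i < n, w i ≠ x) ∨ x = w l}
        {x | ∃ k, a ≤ k ∧ k ≤ b ∧ w k = x} := by
    intro l a b hl hb h
    rw [Set.disjoint_left]
    rintro x hx ⟨k, h1, h2, rfl⟩
    exact nH (by omega) hl (by omega) hx
  have K33 : ∀ k, 2 ≤ k → k ≤ n - 2 →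
      Conn G {x | (x ∈ A ∧ ∀ i < n, w i ≠ x) ∨ x = w k} r (w k) → False := by
    intro k hk2 hkt hk
    exact hD.K33 (q0 := w 0) (q1 := w k) (x0 := w 1) (x1 := w (n - 1)) (x2 := r)
      (X0 := {w 0, w 1}) (X1 := {w 0, w (n - 1)})
      (hS 1 (by omega)) (hS (n - 1) (by omega)) hr
      ⟨hinj (by omega) (by omega) (by omega), hinj (by omega) (by omega) (by omega),
        hrw 0 (by omega)⟩
      ⟨hinj (by omega) (by omega) (by omega), hinj (by omega) (by omega) (by omega),
        hrw k (by omega)⟩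
      (sub2 (by omega) (by omega)) (sub2 (by omega) (by omega)) (subH (by omega))
      (subG (by omega)) (subG (by omega)) (subH (by omega))
      (Conn.edge a01 (by simp) (by simp)) (Conn.edge hcl.symm (by simp) (by simp)) h0.symm
      (hw.seg (i := 1) (j := k) (by omega) (by omega)).symm
      (hw.seg (i := k) (j := n - 1) (by omega) (by omega)) hk.symm
      ⟨n2 (by omega) (by omega) (by omega) (by omega) (by omega), r2 (by omega) (by omega)⟩
      ⟨n2 (by omega) (by omega) (by omega) (by omega) (by omega), r2 (by omega) (by omega)⟩
      ⟨nH (by omega) (by omega) (by omega), nH (by omega) (by omega) (by omega)⟩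
      ⟨nG (by omega) (by omega) (by omega), rG (by omega)⟩
      ⟨nG (by omega) (by omega) (by omega), rG (by omega)⟩
      ⟨nH (by omega) (by omega) (by omega), nH (by omega) (by omega) (by omega)⟩
      (d2G (by omega) (by omega) (by omega) (by omega) (by omega))
      (d2H (by omega) (by omega) (by omega) (by omega) (by omega))
      (d2G (by omega) (by omega) (by omega) (by omega) (by omega))
      (d2H (by omega) (by omega) (by omega) (by omega) (by omega))
      (dHG (by omega) (by omega) (by omega)) (dHG (by omega) (by omega) (by omega))
  obtain ⟨k, hk, hk0, hk1, hck⟩ := hit 0 1 2 (by omega) (by omega) (by omega) (by omega) (by omega)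
    a01
  by_cases hkt : k ≤ n - 2
  · exact K33 k (by omega) hkt hck
  obtain rfl : k = n - 1 := by omega
  obtain ⟨l, hl, hl1, hl0, hcl'⟩ := hit (n - 1) 0 1 (by omega) (by omega) (by omega) (by omega)
    (by omega) hcl
  by_cases hlt : 2 ≤ l
  · exact K33 l hlt (by omega) hcl'
  obtain rfl : l = 1 := by omega
  exact hD.K5 (d0 := w 0) (d1 := w 1) (d2 := w (n - 1)) (d3 := r)
    (X01 := {w 0, w 1}) (X02 := {w 0, w (n - 1)})
    (hS 0 (by omega)) (hS 1 (by omega)) (hS (n - 1) (by omega)) hr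
    (hinj (by omega) (by omega) (by omega)) (hinj (by omega) (by omega) (by omega))
    (hrw 0 (by omega)) (hinj (by omega) (by omega) (by omega)) (hrw 1 (by omega))
    (hrw (n - 1) (by omega))
    (sub2 (by omega) (by omega)) (sub2 (by omega) (by omega)) (subH (by omega))
    (subG (by omega)) (subH (by omega)) (subH (by omega))
    (Conn.edge a01 (by simp) (by simp)) (Conn.edge hcl.symm (by simp) (by simp)) h0.symm
    (hw.seg (i := 1) (j := n - 1) (by omega) (by omega)) hcl'.symm hck.symm
    ⟨n2 (by omega) (by omega) (by omega) (by omega) (by omega), r2 (by omega) (by omega)⟩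
    ⟨n2 (by omega) (by omega) (by omega) (by omega) (by omega), r2 (by omega) (by omega)⟩
    ⟨nH (by omega) (by omega) (by omega), nH (by omega) (by omega) (by omega)⟩
    ⟨nG (by omega) (by omega) (by omega), rG (by omega)⟩
    ⟨nH (by omega) (by omega) (by omega), nH (by omega) (by omega) (by omega)⟩
    ⟨nH (by omega) (by omega) (by omega), nH (by omega) (by omega) (by omega)⟩
    (d2H (by omega) (by omega) (by omega) (by omega) (by omega))
    (d2H (by omega) (by omega) (by omega) (by omega) (by omega))
    (dHG (by omega) (by omega) (by omega))

theorem no_cycle {A : Finset V} {S : Set V} (hD : Drawn A G S) (hN : NoSep A G S)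
    {w : ℕ → V} {n : ℕ} (hn : 3 ≤ n) (hw : GPath G w n) (hcl : G.Adj (w (n - 1)) (w 0))
    (hS : ∀ i < n, w i ∈ A ∧ w i ∈ S) {r : V} (hr : r ∈ A ∧ r ∈ S) (hrw : ∀ i < n, w i ≠ r) :
    False := by
  have a01 : G.Adj (w 0) (w 1) := hw.adj 0 (by omega)
  have hc := hN.conn (hS 0 (by omega)).1 (hS 1 (by omega)).1 (hS 0 (by omega)).2
    (hS 1 (by omega)).2 a01 hr.1 (hrw 0 (by omega)).symm
    (hrw 1 (by omega)).symm (hS 2 (by omega)).1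
    (fun h => absurd (hw.inj 2 (by omega) 0 (by omega) h) (by omega))
    (fun h => absurd (hw.inj 2 (by omega) 1 (by omega) h) (by omega))
  obtain ⟨d, ⟨l, hl, rfl⟩, -, hc⟩ := first_hit (D := {x | ∃ l < n, w l = x}) hc
    (by rintro ⟨l, hl, h⟩; exact hrw l hl h) ⟨2, by omega, rfl⟩
  have hmod : ∀ i, (i + l) % n < n := fun i => Nat.mod_lt _ (by omega)
  have hmod2 : ∀ i, i < n → (i + l) % n = if i + l < n then i + l else i + l - n := by
    intro i hi
    split_ifs with h
    · exact Nat.mod_eq_of_lt h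
    · rw [Nat.mod_eq_sub_mod (by omega), Nat.mod_eq_of_lt (by omega)]
  have hadj : ∀ i j, i < n → j < n → (j = i + 1 ∨ (i = n - 1 ∧ j = 0)) → G.Adj (w i) (w j) := by
    rintro i j hi hj (rfl | ⟨rfl, rfl⟩)
    · exact hw.adj i hj
    · exact hcl
  refine cyc_aux hD hN (w := fun i => w ((i + l) % n)) hn ⟨?_, ?_⟩ ?_ (fun i _ => hS _ (hmod i)) hr
    (fun i _ => hrw _ (hmod i)) ?_
  · intro i hi j hj h
    have := hw.inj _ (hmod i) _ (hmod j) h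
    rw [hmod2 i hi, hmod2 j hj] at this
    split_ifs at this <;> omega
  · intro i hi
    refine hadj _ _ (hmod _) (hmod _) ?_
    rw [hmod2 i (by omega), hmod2 (i + 1) hi]
    split_ifs <;> omega
  · refine hadj _ _ (hmod _) (hmod _) ?_
    rw [hmod2 (n - 1) (by omega), hmod2 0 (by omega)]
    split_ifs <;> omega
  · have e0 : (0 + l) % n = l := by rw [zero_add, Nat.mod_eq_of_lt hl]
    simp only [e0]
    refine hc.mono ?_
    rintro x (⟨⟨hxA, -⟩, hx⟩ | hx)
    · exact Or.inl ⟨hxA, fun i _ he => hx ⟨_, hmod i, he⟩⟩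
    · exact Or.inr hx

theorem induced_path {A : Finset V} {S : Set V} (hD : Drawn A G S) (hN : NoSep A G S)
    {w : ℕ → V} {m : ℕ} (hw : GPath G w m)
    (hS : ∀ i < m, w i ∈ A ∧ w i ∈ S) {r : V} (hr : r ∈ A ∧ r ∈ S) (hrw : ∀ i < m, w i ≠ r)
    {i j : ℕ} (hij : i < j) (hj : j < m) (ha : G.Adj (w i) (w j)) : j = i + 1 := by
  by_contra hne
  refine no_cycle hD hN (w := fun k => w (i + k)) (n := j - i + 1) (by omega) ⟨?_, ?_⟩ ?_
    (fun k hk => hS _ (by omega)) hr (fun k hk => hrw _ (by omega))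
  · intro a ha b hb h
    have := hw.inj _ (by omega) _ (by omega) h
    omega
  · intro a ha
    exact hw.adj (i + a) (by omega)
  · have e : i + (j - i + 1 - 1) = j := by omega
    simp only [e, add_zero]
    exact ha.symm

end Combi

section Thomassen

variable {V : Type*} [DecidableEq V] {G : SimpleGraph V}

/-- `φ` is proper on `A`. -/
def GProper (A : Finset V) (G : SimpleGraph V) (φ : V → ℕ) : Prop :=
  ∀ u ∈ A, ∀ v ∈ A, G.Adj u v → φ u ≠ φ v

/-- List sizes outside the exceptional set `R`. -/
def GLists (A : Finset V) (S : Set V) (L : V → Finset ℕ) (R : Set V) : Prop :=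
  ∀ v ∈ A, v ∉ R → 3 ≤ (L v).card ∧ (v ∉ S → 5 ≤ (L v).card)

/-- The precoloring `c1, c2` of `r1, r2` extends to a coloring satisfying `Q`. -/
def GExt (A : Finset V) (G : SimpleGraph V) (L : V → Finset ℕ) (r1 r2 : V) (Q : (V → ℕ) → Prop)
    (c1 c2 : ℕ) : Prop :=
  ∃ φ : V → ℕ, φ r1 = c1 ∧ φ r2 = c2 ∧ (∀ v ∈ A, v ≠ r1 → v ≠ r2 → φ v ∈ L v) ∧
    GProper A G φ ∧ Q φ

theorem GLists.mono {A B : Finset V} {S : Set V} {L : V → Finset ℕ} {R R' : Set V}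
    (h : GLists A S L R) (hB : B ⊆ A) (hR : ∀ v ∈ B, v ∈ R → v ∈ R') : GLists B S L R' :=
  fun v hv hvR => h v (hB hv) (fun h' => hvR (hR v hv h'))

theorem GProper.mono {A B : Finset V} {φ : V → ℕ}
    (h : GProper A G φ) (hB : B ⊆ A) : GProper B G φ :=
  fun u hu v hv => h u (hB hu) v (hB hv)

theorem glue {A : Finset V} {S : Set V} {u v : V} {A1 A2 : Finset V} (h : GSep A G S u v A1 A2)
    {f g : V → ℕ} (hf : GProper A1 G f) (hg : GProper A2 G g) (hu : f u = g u) (hv : f v = g v) :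
    ∃ φ : V → ℕ, (∀ w ∈ A1, φ w = f w) ∧ (∀ w ∈ A2, φ w = g w) ∧ GProper A G φ := by
  let φ : V → ℕ := fun w => if w ∈ A1 then f w else g w
  have h1 : ∀ w ∈ A1, φ w = f w := fun w hw => by simp [φ, hw]
  have h2 : ∀ w ∈ A2, φ w = g w := by
    intro w hw
    by_cases hw1 : w ∈ A1
    · rw [h1 w hw1]
      rcases h.both hw1 hw with rfl | rfl
      · exact hu
      · exact hv
    · simp [φ, hw1]
  refine ⟨φ, h1, h2, ?_⟩
  intro x hx y hy hxy
  rcases h.edge hx hy hxy with ⟨hx, hy⟩ | ⟨hx, hy⟩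
  · rw [h1 x hx, h1 y hy]; exact hf x hx y hy hxy
  · rw [h2 x hx, h2 y hy]; exact hg x hx y hy hxy

theorem proper_update {A : Finset V} {φ : V → ℕ} {v : V} {c : ℕ}
    (h : GProper (A.erase v) G φ) (hc : ∀ z ∈ A, G.Adj v z → φ z ≠ c) :
    GProper A G (Function.update φ v c) := by
  intro x hx y hy hxy
  by_cases hxv : x = v
  · subst hxv
    rw [Function.update_self, Function.update_of_ne hxy.ne.symm]
    exact (hc y hy hxy).symm
  by_cases hyv : y = v
  · subst hyv
    rw [Function.update_self, Function.update_of_ne hxv]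
    exact hc x hx hxy.symm
  rw [Function.update_of_ne hxv, Function.update_of_ne hyv]
  exact h x (Finset.mem_erase.2 ⟨hxv, hx⟩) y (Finset.mem_erase.2 ⟨hyv, hy⟩) hxy

theorem card_sdiff1 (s : Finset ℕ) (a : ℕ) : s.card ≤ (s \ {a}).card + 1 := by
  have := Finset.le_card_sdiff {a} s
  rw [Finset.card_singleton] at this
  omega

theorem card_sdiff2 (s : Finset ℕ) (a b : ℕ) : s.card ≤ (s \ {a, b}).card + 2 := by
  have := Finset.le_card_sdiff {a, b} s
  have h2 := Finset.card_le_two (a := a) (b := b)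
  omega

/-- Two precolored adjacent vertices. -/
def T2P (G : SimpleGraph V) (A : Finset V) : Prop :=
  ∀ (S : Set V) (L : V → Finset ℕ) (x y : V), Drawn A G S → x ∈ A ∧ x ∈ S → y ∈ A ∧ y ∈ S →
    G.Adj x y → GLists A S L {x, y} → ∀ c1 c2, c1 ≠ c2 → GExt A G L x y (fun _ => True) c1 c2

/-- One precolored vertex. -/
def T1P (G : SimpleGraph V) (A : Finset V) : Prop :=
  ∀ (S : Set V) (L : V → Finset ℕ) (x : V), Drawn A G S → x ∈ A ∧ x ∈ S →
    GLists A S L {x} → ∀ c, ∃ φ : V → ℕ, φ x = c ∧ (∀ v ∈ A, v ≠ x → φ v ∈ L v) ∧ GProper A G φ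

/-- No precolored vertex. -/
def T0P (G : SimpleGraph V) (A : Finset V) : Prop :=
  ∀ (S : Set V) (L : V → Finset ℕ), Drawn A G S →
    GLists A S L ∅ → ∃ φ : V → ℕ, (∀ v ∈ A, φ v ∈ L v) ∧ GProper A G φ

theorem T2_sep {A : Finset V} {S : Set V} {u v : V} {A1 A2 : Finset V}
    (ih : ∀ B : Finset V, B.card < A.card → T2P G B) (h : GSep A G S u v A1 A2)
    (hD : Drawn A G S) {L : V → Finset ℕ} {x y : V} (hx : x ∈ A1 ∧ x ∈ S) (hy : y ∈ A1 ∧ y ∈ S)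
    (hxy : G.Adj x y) (hL : GLists A S L {x, y}) {c1 c2 : ℕ} (hc : c1 ≠ c2) :
    GExt A G L x y (fun _ => True) c1 c2 := by
  obtain ⟨f, f1, f2, f3, f4, -⟩ := ih A1 h.c1 S L x y (hD.mono h.sub1 (fun _ _ h => h)) hx hy hxy
    (hL.mono h.sub1 (fun _ _ h => h)) c1 c2 hc
  obtain ⟨g, g1, g2, g3, g4, -⟩ := ih A2 h.c2 S L u v (hD.mono h.sub2 (fun _ _ h => h))
    ⟨h.u1.2, h.hu⟩ ⟨h.v1.2, h.hv⟩ h.adj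
    (hL.mono h.sub2 (by
      rintro w hw (rfl | rfl)
      · exact h.both hx.1 hw
      · exact h.both hy.1 hw)) (f u) (f v) (f4 u h.u1.1 v h.v1.1 h.adj)
  obtain ⟨φ, p1, p2, p3⟩ := glue h f4 g4 g1.symm g2.symm
  refine ⟨φ, by rw [p1 x hx.1, f1], by rw [p1 y hy.1, f2], ?_, p3, trivial⟩
  intro w hw hwx hwy
  by_cases hw1 : w ∈ A1
  · rw [p1 w hw1]; exact f3 w hw1 hwx hwy
  · have hw2 := (h.mem_or hw).resolve_left hw1
    rw [p2 w hw2]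
    refine g3 w hw2 ?_ ?_
    · rintro rfl; exact hw1 h.u1.1
    · rintro rfl; exact hw1 h.v1.1

theorem T_step {A : Finset V}
    (ih : ∀ B : Finset V, B.card < A.card → T2P G B ∧ T1P G B ∧ T0P G B) :
    T2P G A ∧ T1P G A ∧ T0P G A := by
  classical
  have h2 : T2P G A := by
    intro S L x y hD hx hy hxy hL c1 c2 hc
    by_cases hN : NoSep A G S
    swap
    · simp only [NoSep, not_forall, not_not] at hN
      obtain ⟨u, v, A1, A2, h⟩ := hN
      rcases h.edge hx.1 hy.1 hxy with ⟨h1, h2⟩ | ⟨h1, h2⟩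
      · exact T2_sep (fun B hB => (ih B hB).1) h hD ⟨h1, hx.2⟩ ⟨h2, hy.2⟩ hxy hL hc
      · exact T2_sep (fun B hB => (ih B hB).1) h.symm hD ⟨h1, hx.2⟩ ⟨h2, hy.2⟩ hxy hL hc
    by_cases hv : ∃ v ∈ A, v ∈ S ∧ v ≠ y ∧ G.Adj x v
    · obtain ⟨v, hvA, hvS, hvy, hxv⟩ := hv
      have hvL : 3 ≤ (L v).card := (hL v hvA (by
        rintro (rfl | rfl)
        · exact hxv.ne rfl
        · exact hvy rfl)).1
      have hvL' : 1 < (L v \ {c1}).card := by have := card_sdiff1 (L v) c1; omega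
      obtain ⟨α, hα, β, hβ, hαβ⟩ := Finset.one_lt_card.1 hvL'
      simp only [Finset.mem_sdiff, Finset.mem_singleton] at hα hβ
      let L' : V → Finset ℕ := fun z => if G.Adj v z ∧ z ∉ S then L z \ {α, β} else L z
      have hcard := Finset.card_erase_lt_of_mem hvA
      obtain ⟨φ, f1, f2, f3, f4, -⟩ := (ih (A.erase v) hcard).1
        (S ∪ {x | ∃ w ∈ ({v} : Set V), G.Adj w x}) L' x y
        (hD.delete {v} (by simp [hvA, hvS]) (Finset.erase_subset _ _) (by simp +contextual))
        ⟨Finset.mem_erase.2 ⟨hxv.ne, hx.1⟩, Or.inl hx.2⟩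
        ⟨Finset.mem_erase.2 ⟨hvy.symm, hy.1⟩, Or.inl hy.2⟩ hxy
        (by
          intro z hz hzR
          have := hL z (Finset.mem_of_mem_erase hz) hzR
          simp only [L', Set.mem_union, Set.mem_singleton_iff, exists_eq_left, Set.mem_ofPred_eq]
          split_ifs with h
          · have h' := card_sdiff2 (L z) α β
            have := this.2 h.2
            exact ⟨by omega, fun h2 => absurd (Or.inr h.1) h2⟩
          · exact ⟨this.1, fun h2 => this.2 (fun h => h2 (Or.inl h))⟩) c1 c2 hc
      have hLL : ∀ z, L' z ⊆ L z := by
        intro z; simp only [L']; split_ifs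
        · exact Finset.sdiff_subset
        · exact subset_rfl
      have hns : ∀ z ∈ A, G.Adj v z → z ∉ S → φ z ≠ α ∧ φ z ≠ β := by
        intro z hz hvz hzS
        have := f3 z (Finset.mem_erase.2 ⟨hvz.ne.symm, hz⟩) (fun h => hzS (h ▸ hx.2))
          (fun h => hzS (h ▸ hy.2))
        simp only [L', hvz, hzS, not_false_eq_true, and_self, if_true, Finset.mem_sdiff,
          Finset.mem_insert, Finset.mem_singleton, not_or] at this
        exact this.2
      have key : ∃ γ, (γ = α ∨ γ = β) ∧ ∀ z ∈ A, z ∈ S → z ≠ x → G.Adj v z → φ z ≠ γ := by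
        by_cases hw : ∃ w ∈ A, w ∈ S ∧ w ≠ x ∧ G.Adj v w
        · obtain ⟨w, hwA, hwS, hwx, hvw⟩ := hw
          have huniq : ∀ z ∈ A, z ∈ S → z ≠ x → G.Adj v z → z = w := by
            intro z hz hzS hzx hvz
            by_contra hzw
            exact deg_le hD hN ⟨hvA, hvS⟩ hx ⟨hwA, hwS⟩ ⟨hz, hzS⟩ hxv.symm hvw hvz hwx.symm
              hzx.symm (Ne.symm hzw)
          by_cases hwα : φ w = α
          · refine ⟨β, Or.inr rfl, fun z hz h1 h2 h3 => ?_⟩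
            rw [huniq z hz h1 h2 h3, hwα]; exact hαβ
          · refine ⟨α, Or.inl rfl, fun z hz h1 h2 h3 => ?_⟩
            rw [huniq z hz h1 h2 h3]; exact hwα
        · exact ⟨α, Or.inl rfl, fun z hz h1 h2 h3 => absurd ⟨z, hz, h1, h2, h3⟩ hw⟩
      obtain ⟨γ, hγ, hγ2⟩ := key
      refine ⟨Function.update φ v γ, ?_, ?_, ?_, proper_update f4 ?_, trivial⟩
      · rw [Function.update_of_ne hxv.ne, f1]
      · rw [Function.update_of_ne hvy.symm, f2]
      · intro z hz hzx hzy
        by_cases hzv : z = v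
        · subst hzv
          rw [Function.update_self]
          rcases hγ with rfl | rfl
          · exact hα.1
          · exact hβ.1
        · rw [Function.update_of_ne hzv]
          exact hLL z (f3 z (Finset.mem_erase.2 ⟨hzv, hz⟩) hzx hzy)
      · intro z hz hvz
        by_cases hzS : z ∈ S
        · by_cases hzx : z = x
          · rw [hzx, f1]
            rcases hγ with rfl | rfl
            · exact fun h => hα.2 h.symm
            · exact fun h => hβ.2 h.symm
          · exact hγ2 z hz hzS hzx hvz
        · have := hns z hz hvz hzS
          rcases hγ with rfl | rfl
          · exact this.1
          · exact this.2
    · let L' : V → Finset ℕ := fun z => if G.Adj x z then L z \ {c1} else L z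
      have hcard := Finset.card_erase_lt_of_mem hx.1
      obtain ⟨φ, f2, f3, f4⟩ := (ih (A.erase x) hcard).2.1
        (S ∪ {z | ∃ w ∈ ({x} : Set V), G.Adj w z}) L' y
        (hD.delete {x} (by simp [hx.1, hx.2]) (Finset.erase_subset _ _) (by simp +contextual))
        ⟨Finset.mem_erase.2 ⟨hxy.ne.symm, hy.1⟩, Or.inl hy.2⟩
        (by
          intro z hz hzR
          rw [Finset.mem_erase] at hz
          have := hL z hz.2 (by
            rintro (h | h)
            · exact hz.1 h
            · exact hzR h)
          simp only [L', Set.mem_union, Set.mem_singleton_iff, exists_eq_left, Set.mem_ofPred_eq]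
          split_ifs with h
          · have h' := card_sdiff1 (L z) c1
            have := this.2 (fun hzS => hv ⟨z, hz.2, hzS, hzR, h⟩)
            exact ⟨by omega, fun h2 => absurd (Or.inr h) h2⟩
          · exact ⟨this.1, fun h2 => this.2 (fun h => h2 (Or.inl h))⟩) c2
      refine ⟨Function.update φ x c1, ?_, ?_, ?_, proper_update f4 ?_, trivial⟩
      · rw [Function.update_self]
      · rw [Function.update_of_ne hxy.ne.symm, f2]
      · intro z hz hzx hzy
        rw [Function.update_of_ne hzx]
        have := f3 z (Finset.mem_erase.2 ⟨hzx, hz⟩) hzy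
        simp only [L'] at this
        split_ifs at this
        · exact (Finset.mem_sdiff.1 this).1
        · exact this
      · intro z hz hxz
        by_cases hzy : z = y
        · rw [hzy, f2]; exact hc.symm
        · have := f3 z (Finset.mem_erase.2 ⟨hxz.ne.symm, hz⟩) hzy
          simp only [L', hxz, if_true, Finset.mem_sdiff, Finset.mem_singleton] at this
          exact this.2
  have h1 : T1P G A := by
    intro S L x hD hx hL c
    by_cases hy : ∃ y ∈ A, y ∈ S ∧ G.Adj x y
    · obtain ⟨y, hyA, hyS, hxy⟩ := hy
      have := (hL y hyA (fun h => hxy.ne (by simpa using h.symm))).1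
      have h' := card_sdiff1 (L y) c
      obtain ⟨d, hd⟩ := Finset.card_pos.1 (show 0 < (L y \ {c}).card by omega)
      simp only [Finset.mem_sdiff, Finset.mem_singleton] at hd
      obtain ⟨φ, f1, f2, f3, f4, -⟩ := h2 S L x y hD hx ⟨hyA, hyS⟩ hxy
        (hL.mono subset_rfl (fun v _ hv => Or.inl hv)) c d (fun h => hd.2 h.symm)
      refine ⟨φ, f1, ?_, f4⟩
      intro v hv hvx
      by_cases hvy : v = y
      · rw [hvy, f2]; exact hd.1
      · exact f3 v hv hvx hvy
    · let L' : V → Finset ℕ := fun z => if G.Adj x z then L z \ {c} else L z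
      have hcard := Finset.card_erase_lt_of_mem hx.1
      obtain ⟨φ, f3, f4⟩ := (ih (A.erase x) hcard).2.2
        (S ∪ {z | ∃ w ∈ ({x} : Set V), G.Adj w z}) L'
        (hD.delete {x} (by simp [hx.1, hx.2]) (Finset.erase_subset _ _) (by simp +contextual))
        (by
          intro z hz _
          rw [Finset.mem_erase] at hz
          have := hL z hz.2 hz.1
          simp only [L', Set.mem_union, Set.mem_singleton_iff, exists_eq_left, Set.mem_ofPred_eq]
          split_ifs with h
          · have h' := card_sdiff1 (L z) c
            have := this.2 (fun hzS => hy ⟨z, hz.2, hzS, h⟩)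
            exact ⟨by omega, fun h2 => absurd (Or.inr h) h2⟩
          · exact ⟨this.1, fun h2 => this.2 (fun h => h2 (Or.inl h))⟩)
      refine ⟨Function.update φ x c, ?_, ?_, proper_update f4 ?_⟩
      · rw [Function.update_self]
      · intro z hz hzx
        rw [Function.update_of_ne hzx]
        have := f3 z (Finset.mem_erase.2 ⟨hzx, hz⟩)
        simp only [L'] at this
        split_ifs at this
        · exact (Finset.mem_sdiff.1 this).1
        · exact this
      · intro z hz hxz
        have := f3 z (Finset.mem_erase.2 ⟨hxz.ne.symm, hz⟩)
        simp only [L', hxz, if_true, Finset.mem_sdiff, Finset.mem_singleton] at this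
        exact this.2
  refine ⟨h2, h1, ?_⟩
  intro S L hD hL
  by_cases hS : ∃ v ∈ A, v ∈ S
  · obtain ⟨v, hvA, hvS⟩ := hS
    have := (hL v hvA (by simp)).1
    obtain ⟨c, hc⟩ := Finset.card_pos.1 (show 0 < (L v).card by omega)
    obtain ⟨φ, f1, f2, f3⟩ := h1 S L v hD ⟨hvA, hvS⟩ (hL.mono subset_rfl (by simp)) c
    refine ⟨φ, fun z hz => ?_, f3⟩
    by_cases hzv : z = v
    · rw [hzv, f1]; exact hc
    · exact f2 z hz hzv
  · rcases A.eq_empty_or_nonempty with rfl | ⟨v, hvA⟩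
    · exact ⟨fun _ => 0, by simp, by intro u hu; simp at hu⟩
    have hL5 : ∀ z ∈ A, 5 ≤ (L z).card := fun z hz => (hL z hz (by simp)).2 (fun h => hS ⟨z, hz, h⟩)
    have := hL5 v hvA
    obtain ⟨c, hc⟩ := Finset.card_pos.1 (show 0 < (L v).card by omega)
    let L' : V → Finset ℕ := fun z => if G.Adj v z then L z \ {c} else L z
    have hcard := Finset.card_erase_lt_of_mem hvA
    obtain ⟨φ, f3, f4⟩ := (ih (A.erase v) hcard).2.2 _ L'
      (hD.refocus v hvA (Finset.erase_subset _ _) (by simp +contextual))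
      (by
        intro z hz _
        rw [Finset.mem_erase] at hz
        have := hL5 z hz.2
        simp only [L', Set.mem_ofPred_eq]
        split_ifs with h
        · have h' := card_sdiff1 (L z) c
          exact ⟨by omega, fun h2 => absurd h h2⟩
        · exact ⟨by omega, fun h2 => this⟩)
    refine ⟨Function.update φ v c, ?_, proper_update f4 ?_⟩
    · intro z hz
      by_cases hzv : z = v
      · rw [hzv, Function.update_self]; exact hc
      rw [Function.update_of_ne hzv]
      have := f3 z (Finset.mem_erase.2 ⟨hzv, hz⟩)
      simp only [L'] at this
      split_ifs at this
      · exact (Finset.mem_sdiff.1 this).1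
      · exact this
    · intro z hz hxz
      have := f3 z (Finset.mem_erase.2 ⟨hxz.ne.symm, hz⟩)
      simp only [L', hxz, if_true, Finset.mem_sdiff, Finset.mem_singleton] at this
      exact this.2

theorem T_all (A : Finset V) : T2P G A ∧ T1P G A ∧ T0P G A := by
  induction hn : A.card using Nat.strong_induction_on generalizing A with
  | _ n ih =>
    subst hn
    exact T_step (fun B hB => ih B.card hB B rfl)

theorem T2_all (A : Finset V) : T2P G A := (T_all A).1

end Thomassen

section Compose

variable {V : Type*} [DecidableEq V] {G : SimpleGraph V}

/-- The pairs of distinct colors satisfying `P` include all pairs except those of one of three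
simple kinds. -/
def Gv (P : ℕ → ℕ → Prop) : Prop :=
  (∃ a, ∀ c1 c2, c1 ≠ c2 → c1 ≠ a → P c1 c2) ∨ (∃ a, ∀ c1 c2, c1 ≠ c2 → c2 ≠ a → P c1 c2) ∨
    (∃ a b, ∀ c1 c2, c1 ≠ c2 → ¬ (c1 = a ∧ c2 = b) → ¬ (c1 = b ∧ c2 = a) → P c1 c2)

theorem Gv.mono {P Q : ℕ → ℕ → Prop} (h : Gv P) (hPQ : ∀ c1 c2, c1 ≠ c2 → P c1 c2 → Q c1 c2) :
    Gv Q := by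
  rcases h with ⟨a, h⟩ | ⟨a, h⟩ | ⟨a, b, h⟩
  · exact Or.inl ⟨a, fun c1 c2 hc h1 => hPQ _ _ hc (h _ _ hc h1)⟩
  · exact Or.inr (Or.inl ⟨a, fun c1 c2 hc h1 => hPQ _ _ hc (h _ _ hc h1)⟩)
  · exact Or.inr (Or.inr ⟨a, b, fun c1 c2 hc h1 h2 => hPQ _ _ hc (h _ _ hc h1 h2)⟩)

theorem Gv.of_all {P : ℕ → ℕ → Prop} (h : ∀ c1 c2, c1 ≠ c2 → P c1 c2) : Gv P :=
  Or.inl ⟨0, fun _ _ hc _ => h _ _ hc⟩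

/-- The colors of `u, v` are not `a, b` in some order. -/
def Avoid (u v : V) (a b : ℕ) (φ : V → ℕ) : Prop :=
  ¬ (φ u = a ∧ φ v = b) ∧ ¬ (φ u = b ∧ φ v = a)

/-- Extension statement with one vertex having a list of size two. -/
def EV (G : SimpleGraph V) (A : Finset V) : Prop :=
  ∀ (S : Set V) (L : V → Finset ℕ) (r1 r2 p : V), Drawn A G S → r1 ∈ A ∧ r1 ∈ S →
    r2 ∈ A ∧ r2 ∈ S → p ∈ A ∧ p ∈ S → G.Adj r1 r2 → p ≠ r1 → p ≠ r2 → 2 ≤ (L p).card →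
    GLists A S L {r1, r2, p} → Gv (GExt A G L r1 r2 (fun _ => True))

/-- Extension statement with one edge having a forbidden pair of colors. -/
def EE (G : SimpleGraph V) (A : Finset V) : Prop :=
  ∀ (S : Set V) (L : V → Finset ℕ) (r1 r2 u v : V) (a b : ℕ), Drawn A G S → r1 ∈ A ∧ r1 ∈ S →
    r2 ∈ A ∧ r2 ∈ S → u ∈ A ∧ u ∈ S → v ∈ A ∧ v ∈ S → G.Adj r1 r2 → G.Adj u v →
    ¬ (u = r1 ∧ v = r2) → ¬ (u = r2 ∧ v = r1) →
    GLists A S L {r1, r2} → Gv (GExt A G L r1 r2 (Avoid u v a b))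

theorem GExt.swap {A : Finset V} {L : V → Finset ℕ} {r1 r2 : V} {Q : (V → ℕ) → Prop} {c1 c2 : ℕ}
    (h : GExt A G L r1 r2 Q c1 c2) : GExt A G L r2 r1 Q c2 c1 := by
  obtain ⟨φ, h1, h2, h3, h4, h5⟩ := h
  exact ⟨φ, h2, h1, fun v hv h1 h2 => h3 v hv h2 h1, h4, h5⟩

theorem compose_pt {A : Finset V} {S : Set V} {u v : V} {A1 A2 : Finset V}
    (h : GSep A G S u v A1 A2) {L : V → Finset ℕ} {r1 r2 : V} (h1 : r1 ∈ A1) (h2 : r2 ∈ A1)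
    {Q : (V → ℕ) → Prop} (hQ : ∀ f g : V → ℕ, (∀ w ∈ A2, f w = g w) → Q g → Q f)
    {f : V → ℕ} (f3 : ∀ v ∈ A1, v ≠ r1 → v ≠ r2 → f v ∈ L v) (f4 : GProper A1 G f)
    (hG : GExt A2 G L u v Q (f u) (f v)) : GExt A G L r1 r2 Q (f r1) (f r2) := by
  obtain ⟨g, g1, g2, g3, g4, g5⟩ := hG
  obtain ⟨φ, p1, p2, p3⟩ := glue h f4 g4 g1.symm g2.symm
  refine ⟨φ, p1 _ h1, p1 _ h2, ?_, p3, hQ _ g p2 g5⟩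
  intro w hw hwx hwy
  by_cases hw1 : w ∈ A1
  · rw [p1 w hw1]; exact f3 w hw1 hwx hwy
  · have hw2 := (h.mem_or hw).resolve_left hw1
    rw [p2 w hw2]
    refine g3 w hw2 ?_ ?_
    · rintro rfl; exact hw1 h.u1.1
    · rintro rfl; exact hw1 h.v1.1

theorem compose1 {A : Finset V} {S : Set V} {u v : V} {A1 A2 : Finset V}
    (h : GSep A G S u v A1 A2) (hD : Drawn A G S) {L : V → Finset ℕ} {r1 r2 : V}
    (h1 : r1 ∈ A1) (h2 : r2 ∈ A1)
    {Q : (V → ℕ) → Prop} (hQ : ∀ f g : V → ℕ, (∀ w ∈ A1, f w = g w) → Q g → Q f)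
    (hL : GLists A2 S L {u, v}) (hG : Gv (GExt A1 G L r1 r2 Q)) : Gv (GExt A G L r1 r2 Q) := by
  refine hG.mono ?_
  rintro c1 c2 hc ⟨f, f1, f2, f3, f4, f5⟩
  obtain ⟨g, g1, g2, g3, g4, -⟩ := T2_all (G := G) A2 S L u v (hD.mono h.sub2 (fun _ _ h => h))
    ⟨h.u1.2, h.hu⟩ ⟨h.v1.2, h.hv⟩ h.adj hL (f u) (f v) (f4 u h.u1.1 v h.v1.1 h.adj)
  obtain ⟨φ, p1, p2, p3⟩ := glue h f4 g4 g1.symm g2.symm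
  refine ⟨φ, by rw [p1 _ h1, f1], by rw [p1 _ h2, f2], ?_, p3, hQ _ f p1 f5⟩
  intro w hw hwx hwy
  by_cases hw1 : w ∈ A1
  · rw [p1 w hw1]; exact f3 w hw1 hwx hwy
  · have hw2 := (h.mem_or hw).resolve_left hw1
    rw [p2 w hw2]
    refine g3 w hw2 ?_ ?_
    · rintro rfl; exact hw1 h.u1.1
    · rintro rfl; exact hw1 h.v1.1

theorem compose_a {A : Finset V} {S : Set V} {u v : V} {A1 A2 : Finset V}
    (h : GSep A G S u v A1 A2) (hEV : EV G A1) (hD : Drawn A G S)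
    {L : V → Finset ℕ} {r1 r2 : V} (h1 : r1 ∈ A1 ∧ r1 ∈ S) (h2 : r2 ∈ A1 ∧ r2 ∈ S)
    (h12 : G.Adj r1 r2) (hL : GLists A1 S L {r1, r2})
    {Q : (V → ℕ) → Prop} (hQ : ∀ f g : V → ℕ, (∀ w ∈ A2, f w = g w) → Q g → Q f) {a : ℕ}
    (hG : ∀ c1 c2, c1 ≠ c2 → c1 ≠ a → GExt A2 G L u v Q c1 c2) : Gv (GExt A G L r1 r2 Q) := by
  have hD1 : Drawn A1 G S := hD.mono h.sub1 (fun _ _ h => h)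
  have hT := T2_all (G := G) A1 S L r1 r2 hD1 h1 h2 h12 hL
  by_cases hu1 : u = r1
  · refine Or.inl ⟨a, fun c1 c2 hc hca => ?_⟩
    obtain ⟨f, f1, f2, f3, f4, -⟩ := hT c1 c2 hc
    have := compose_pt h h1.1 h2.1 hQ f3 f4
      (hG _ _ (f4 u h.u1.1 v h.v1.1 h.adj) (by rw [hu1, f1]; exact hca))
    rwa [f1, f2] at this
  by_cases hu2 : u = r2
  · refine Or.inr (Or.inl ⟨a, fun c1 c2 hc hca => ?_⟩)
    obtain ⟨f, f1, f2, f3, f4, -⟩ := hT c1 c2 hc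
    have := compose_pt h h1.1 h2.1 hQ f3 f4
      (hG _ _ (f4 u h.u1.1 v h.v1.1 h.adj) (by rw [hu2, f2]; exact hca))
    rwa [f1, f2] at this
  have hu3 : 3 ≤ (L u).card := (hL u h.u1.1 (by simp [hu1, hu2])).1
  have hE := hEV S (Function.update L u (L u \ {a})) r1 r2 u hD1 h1 h2 ⟨h.u1.1, h.hu⟩ h12 hu1 hu2
    (by
      rw [Function.update_self]
      have := card_sdiff1 (L u) a
      omega)
    (by
      intro z hz hzR
      simp only [Set.mem_insert_iff, Set.mem_singleton_iff, not_or] at hzR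
      rw [Function.update_of_ne hzR.2.2]
      exact hL z hz (by simp [hzR]))
  refine hE.mono ?_
  rintro c1 c2 hc ⟨f, f1, f2, f3, f4, -⟩
  have hfu := f3 u h.u1.1 hu1 hu2
  rw [Function.update_self, Finset.mem_sdiff, Finset.mem_singleton] at hfu
  have := compose_pt (L := L) h h1.1 h2.1 hQ (by
    intro z hz hz1 hz2
    by_cases hzu : z = u
    · rw [hzu]; exact hfu.1
    · have := f3 z hz hz1 hz2
      rwa [Function.update_of_ne hzu] at this) f4
    (hG _ _ (f4 u h.u1.1 v h.v1.1 h.adj) hfu.2)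
  rwa [f1, f2] at this

theorem compose {A : Finset V} {S : Set V} {u v : V} {A1 A2 : Finset V}
    (h : GSep A G S u v A1 A2) (hEV : EV G A1) (hEE : EE G A1) (hD : Drawn A G S)
    {L : V → Finset ℕ} {r1 r2 : V} (h1 : r1 ∈ A1 ∧ r1 ∈ S) (h2 : r2 ∈ A1 ∧ r2 ∈ S)
    (h12 : G.Adj r1 r2) (hL : GLists A1 S L {r1, r2})
    {Q : (V → ℕ) → Prop} (hQ : ∀ f g : V → ℕ, (∀ w ∈ A2, f w = g w) → Q g → Q f)
    (hG : Gv (GExt A2 G L u v Q)) : Gv (GExt A G L r1 r2 Q) := by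
  have hD1 : Drawn A1 G S := hD.mono h.sub1 (fun _ _ h => h)
  have hT := T2_all (G := G) A1 S L r1 r2 hD1 h1 h2 h12 hL
  rcases hG with ⟨a, hG⟩ | ⟨a, hG⟩ | ⟨a, b, hG⟩
  · exact compose_a h hEV hD h1 h2 h12 hL hQ hG
  · exact compose_a h.swap hEV hD h1 h2 h12 hL hQ
      (fun c1 c2 hc hca => (hG c2 c1 hc.symm hca).swap)
  by_cases hu1 : (u = r1 ∧ v = r2) ∨ (u = r2 ∧ v = r1)
  · refine Or.inr (Or.inr ⟨a, b, fun c1 c2 hc k1 k2 => ?_⟩)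
    obtain ⟨f, f1, f2, f3, f4, -⟩ := hT c1 c2 hc
    have := compose_pt h h1.1 h2.1 hQ f3 f4
      (hG _ _ (f4 u h.u1.1 v h.v1.1 h.adj)
        (by rcases hu1 with ⟨e1, e2⟩ | ⟨e1, e2⟩ <;> rw [e1, e2, f1, f2] <;> tauto)
        (by rcases hu1 with ⟨e1, e2⟩ | ⟨e1, e2⟩ <;> rw [e1, e2, f1, f2] <;> tauto))
    rwa [f1, f2] at this
  rw [not_or] at hu1
  have hE := hEE S L r1 r2 u v a b hD1 h1 h2 ⟨h.u1.1, h.hu⟩ ⟨h.v1.1, h.hv⟩ h12 h.adj hu1.1 hu1.2 hL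
  refine hE.mono ?_
  rintro c1 c2 hc ⟨f, f1, f2, f3, f4, f5⟩
  have := compose_pt h h1.1 h2.1 hQ f3 f4 (hG _ _ (f4 u h.u1.1 v h.v1.1 h.adj) f5.1 f5.2)
  rwa [f1, f2] at this

theorem EV_sep {A : Finset V} {S : Set V} {u v : V} {A1 A2 : Finset V}
    (h : GSep A G S u v A1 A2) (ih : ∀ B : Finset V, B.card < A.card → EV G B ∧ EE G B)
    (hD : Drawn A G S) {L : V → Finset ℕ} {r1 r2 p : V} (h1 : r1 ∈ A1 ∧ r1 ∈ S)
    (h2 : r2 ∈ A1 ∧ r2 ∈ S) (hp : p ∈ A ∧ p ∈ S) (h12 : G.Adj r1 r2) (hp1 : p ≠ r1)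
    (hp2 : p ≠ r2) (hLp : 2 ≤ (L p).card) (hL : GLists A S L {r1, r2, p}) :
    Gv (GExt A G L r1 r2 (fun _ => True)) := by
  have hD1 : Drawn A1 G S := hD.mono h.sub1 (fun _ _ h => h)
  have hD2 : Drawn A2 G S := hD.mono h.sub2 (fun _ _ h => h)
  by_cases hpA : p ∈ A1
  · refine compose1 h hD h1.1 h2.1 (fun _ _ _ _ => trivial) (hL.mono h.sub2 ?_)
      ((ih A1 h.c1).1 S L r1 r2 p hD1 h1 h2 ⟨hpA, hp.2⟩ h12 hp1 hp2 hLp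
        (hL.mono h.sub1 (fun _ _ h => h)))
    rintro w hw (rfl | rfl | rfl)
    · exact h.both h1.1 hw
    · exact h.both h2.1 hw
    · exact h.both hpA hw
  · have hp2' := (h.mem_or hp.1).resolve_left hpA
    have hpu : p ≠ u := by rintro rfl; exact hpA h.u1.1
    have hpv : p ≠ v := by rintro rfl; exact hpA h.v1.1
    refine compose h (ih A1 h.c1).1 (ih A1 h.c1).2 hD h1 h2 h12 (hL.mono h.sub1 ?_)
      (fun _ _ _ _ => trivial)
      ((ih A2 h.c2).1 S L u v p hD2 ⟨h.u1.2, h.hu⟩ ⟨h.v1.2, h.hv⟩ ⟨hp2', hp.2⟩ h.adj hpu hpv hLp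
        (hL.mono h.sub2 ?_))
    · rintro w hw (rfl | rfl | rfl)
      · simp
      · simp
      · exact absurd hw hpA
    · rintro w hw (rfl | rfl | rfl)
      · have := h.both h1.1 hw; simp only [Set.mem_insert_iff, Set.mem_singleton_iff]; tauto
      · have := h.both h2.1 hw; simp only [Set.mem_insert_iff, Set.mem_singleton_iff]; tauto
      · simp

theorem Avoid.congr {B : Finset V} {x y : V} (hx : x ∈ B) (hy : y ∈ B) {a b : ℕ} (f g : V → ℕ)
    (h : ∀ w ∈ B, f w = g w) (hg : Avoid x y a b g) : Avoid x y a b f := by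
  unfold Avoid at *
  rwa [h x hx, h y hy]

theorem EE_sep {A : Finset V} {S : Set V} {u v : V} {A1 A2 : Finset V}
    (h : GSep A G S u v A1 A2) (ih : ∀ B : Finset V, B.card < A.card → EV G B ∧ EE G B)
    (hD : Drawn A G S) {L : V → Finset ℕ} {r1 r2 x y : V} {a b : ℕ} (h1 : r1 ∈ A1 ∧ r1 ∈ S)
    (h2 : r2 ∈ A1 ∧ r2 ∈ S) (hx : x ∈ A ∧ x ∈ S) (hy : y ∈ A ∧ y ∈ S) (h12 : G.Adj r1 r2)
    (hxy : G.Adj x y) (k1 : ¬ (x = r1 ∧ y = r2)) (k2 : ¬ (x = r2 ∧ y = r1))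
    (hL : GLists A S L {r1, r2}) :
    Gv (GExt A G L r1 r2 (Avoid x y a b)) := by
  have hD1 : Drawn A1 G S := hD.mono h.sub1 (fun _ _ h => h)
  have hD2 : Drawn A2 G S := hD.mono h.sub2 (fun _ _ h => h)
  have hL2 : GLists A2 S L {u, v} := by
    refine hL.mono h.sub2 ?_
    rintro w hw (rfl | rfl)
    · exact h.both h1.1 hw
    · exact h.both h2.1 hw
  by_cases hA : x ∈ A1 ∧ y ∈ A1
  · exact compose1 h hD h1.1 h2.1 (Avoid.congr hA.1 hA.2) hL2
      ((ih A1 h.c1).2 S L r1 r2 x y a b hD1 h1 h2 ⟨hA.1, hx.2⟩ ⟨hA.2, hy.2⟩ h12 hxy k1 k2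
        (hL.mono h.sub1 (fun _ _ h => h)))
  · have hA2 := (h.edge hx.1 hy.1 hxy).resolve_left hA
    refine compose h (ih A1 h.c1).1 (ih A1 h.c1).2 hD h1 h2 h12
      (hL.mono h.sub1 (fun _ _ h => h)) (Avoid.congr hA2.1 hA2.2)
      ((ih A2 h.c2).2 S L u v x y a b hD2 ⟨h.u1.2, h.hu⟩ ⟨h.v1.2, h.hv⟩ ⟨hA2.1, hx.2⟩
        ⟨hA2.2, hy.2⟩ h.adj hxy ?_ ?_ hL2)
    · rintro ⟨rfl, rfl⟩; exact hA ⟨h.u1.1, h.v1.1⟩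
    · rintro ⟨rfl, rfl⟩; exact hA ⟨h.v1.1, h.u1.1⟩

end Compose

section Paths

variable {V : Type*} [DecidableEq V] {G : SimpleGraph V}

theorem exists_longest {P : (ℕ → V) → ℕ → Prop} {N : ℕ} {w : ℕ → V} {m : ℕ} (h : P w m)
    (hN : ∀ w m, P w m → m ≤ N) : ∃ w m, P w m ∧ ∀ w' m', P w' m' → m' ≤ m := by
  let s : Set ℕ := {m | ∃ w, P w m}
  have hb : BddAbove s := ⟨N, by rintro m ⟨w, hw⟩; exact hN w m hw⟩
  obtain ⟨w', hw'⟩ := Nat.sSup_mem (s := s) ⟨m, w, h⟩ hb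
  exact ⟨w', sSup s, hw', fun w'' m'' h'' => le_csSup hb ⟨w'', h''⟩⟩

theorem GPath.le_card {w : ℕ → V} {m : ℕ} (h : GPath G w m) {A : Finset V}
    (hA : ∀ i < m, w i ∈ A) : m ≤ A.card := by
  have := Finset.card_le_card_of_injOn (s := Finset.range m) (t := A) w
    (fun i hi => hA i (Finset.mem_range.1 hi))
    (fun i hi j hj hij => h.inj i (by simpa using hi) j (by simpa using hj) hij)
  simpa using this

theorem GPath.rev {w : ℕ → V} {m : ℕ} (h : GPath G w m) : GPath G (fun i => w (m - 1 - i)) m := by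
  refine ⟨?_, ?_⟩
  · intro i hi j hj hij
    have := h.inj _ (by omega) _ (by omega) hij
    omega
  · intro i hi
    have := h.adj (m - 1 - (i + 1)) (by omega)
    rw [show m - 1 - (i + 1) + 1 = m - 1 - i by omega] at this
    exact this.symm

theorem GPath.snoc {w : ℕ → V} {m : ℕ} (h : GPath G w m) {z : V} (hz : ∀ j < m, w j ≠ z)
    (ha : G.Adj (w (m - 1)) z) : GPath G (fun i => if i < m then w i else z) (m + 1) := by
  refine ⟨?_, ?_⟩
  · intro i hi j hj hij
    split_ifs at hij with h1 h2 h2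
    · exact h.inj _ h1 _ h2 hij
    · exact absurd hij (hz i h1)
    · exact absurd hij.symm (hz j h2)
    · omega
  · intro i hi
    by_cases h2 : i + 1 < m
    · rw [if_pos h2, if_pos (by omega)]; exact h.adj i h2
    · rw [if_neg h2, if_pos (by omega), show i = m - 1 by omega]; exact ha

/-- `z` is a neighbour in `S` of the path vertex `w i` that does not lie on the path. -/
def Out (A : Finset V) (G : SimpleGraph V) (S : Set V) (w : ℕ → V) (m : ℕ) (i : ℕ) (z : V) :
    Prop :=
  i < m ∧ z ∈ A ∧ z ∈ S ∧ (∀ j < m, w j ≠ z) ∧ G.Adj (w i) z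

theorem Out.rev {A : Finset V} {S : Set V} {w : ℕ → V} {m i : ℕ} {z : V}
    (h : Out A G S (fun i => w (m - 1 - i)) m i z) : Out A G S w m (m - 1 - i) z := by
  obtain ⟨h1, h2, h3, h4, h5⟩ := h
  refine ⟨by omega, h2, h3, fun j hj => ?_, h5⟩
  have : w (m - 1 - (m - 1 - j)) ≠ z := h4 (m - 1 - j) (by omega)
  rwa [show m - 1 - (m - 1 - j) = j by omega] at this

theorem Out.rev' {A : Finset V} {S : Set V} {w : ℕ → V} {m i : ℕ} {z : V}
    (h : Out A G S w m i z) : Out A G S (fun i => w (m - 1 - i)) m (m - 1 - i) z := by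
  obtain ⟨h1, h2, h3, h4, h5⟩ := h
  refine ⟨by omega, h2, h3, fun j hj => h4 _ (by omega), ?_⟩
  change G.Adj (w (m - 1 - (m - 1 - i))) z
  rwa [show m - 1 - (m - 1 - i) = i by omega]

theorem path_ends {A : Finset V} {S : Set V} (hD : Drawn A G S) (hN : NoSep A G S)
    {w : ℕ → V} {m : ℕ} (hw : GPath G w m) (hS : ∀ i < m, w i ∈ A ∧ w i ∈ S) {y : V}
    (hy : Out A G S w m 0 y) :
    (∀ i z, Out A G S w m i z → i = 0 ∧ z = y) ∨
    ∃ x, Out A G S w m (m - 1) x ∧ (m = 1 → x ≠ y) ∧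
      ∀ i z, Out A G S w m i z → (i = 0 ∧ z = y) ∨ (i = m - 1 ∧ z = x) := by
  have hm : 0 < m := hy.1
  have hend : ∀ i z, Out A G S w m i z → i = 0 ∨ i = m - 1 := by
    rintro i z ⟨h1, h2, h3, h4, h5⟩
    by_contra hi
    have e := hw.adj (i - 1) (by omega)
    rw [show i - 1 + 1 = i by omega] at e
    exact deg_le hD hN (hS i h1) (hS (i - 1) (by omega)) (hS (i + 1) (by omega)) ⟨h2, h3⟩
      e.symm (hw.adj i (by omega)) h5
      (fun h => absurd (hw.inj _ (by omega) _ (by omega) h) (by omega))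
      (h4 _ (by omega)) (h4 _ (by omega))
  have huniq : 2 ≤ m → ∀ i z z', Out A G S w m i z → Out A G S w m i z' → z = z' := by
    intro hm2 i z z' hz hz'
    by_contra hne
    obtain ⟨k, hk, hik⟩ : ∃ k < m, G.Adj (w i) (w k) := by
      by_cases hi : i = 0
      · subst hi; exact ⟨1, by omega, hw.adj 0 (by omega)⟩
      · have hi2 := hz.1
        have e := hw.adj (i - 1) (by omega)
        rw [show i - 1 + 1 = i by omega] at e
        exact ⟨i - 1, by omega, e.symm⟩
    exact deg_le hD hN (hS i hz.1) (hS k hk) ⟨hz.2.1, hz.2.2.1⟩ ⟨hz'.2.1, hz'.2.2.1⟩ hik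
      hz.2.2.2.2 hz'.2.2.2.2 (hz.2.2.2.1 k hk) (hz'.2.2.2.1 k hk) hne
  by_cases hx : ∃ x, Out A G S w m (m - 1) x ∧ (m = 1 → x ≠ y)
  · obtain ⟨x, hx1, hx2⟩ := hx
    refine Or.inr ⟨x, hx1, hx2, fun i z hz => ?_⟩
    by_cases hm2 : 2 ≤ m
    · rcases hend i z hz with rfl | rfl
      · exact Or.inl ⟨rfl, huniq hm2 _ _ _ hz hy⟩
      · exact Or.inr ⟨rfl, huniq hm2 _ _ _ hz hx1⟩
    · obtain rfl : m = 1 := by omega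
      obtain rfl : i = 0 := by have := hz.1; omega
      by_contra hcon
      have hcon1 : z ≠ y := fun h => hcon (Or.inl ⟨rfl, h⟩)
      have hcon2 : z ≠ x := fun h => hcon (Or.inr ⟨rfl, h⟩)
      exact deg_le hD hN (hS 0 hm) ⟨hx1.2.1, hx1.2.2.1⟩ ⟨hy.2.1, hy.2.2.1⟩ ⟨hz.2.1, hz.2.2.1⟩
        hx1.2.2.2.2 hy.2.2.2.2 hz.2.2.2.2 (hx2 rfl) hcon2.symm hcon1.symm
  · refine Or.inl (fun i z hz => ?_)
    by_cases hm2 : 2 ≤ m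
    · rcases hend i z hz with rfl | rfl
      · exact ⟨rfl, huniq hm2 _ _ _ hz hy⟩
      · exact absurd ⟨z, hz, by omega⟩ hx
    · obtain rfl : m = 1 := by omega
      obtain rfl : i = 0 := by have := hz.1; omega
      refine ⟨rfl, ?_⟩
      by_contra hzy
      exact hx ⟨z, hz, fun _ => hzy⟩

/-- Alternating colors. -/
def alt (γ δ : ℕ) (i : ℕ) : ℕ := if i % 2 = 0 then γ else δ

theorem alt_or (γ δ : ℕ) (i : ℕ) : alt γ δ i = γ ∨ alt γ δ i = δ := by
  unfold alt; split_ifs <;> simp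

/-- The vertices of `A` off the path. -/
def off (A : Finset V) (w : ℕ → V) (m : ℕ) : Finset V := A \ (Finset.range m).image w

theorem mem_off {A : Finset V} {w : ℕ → V} {m : ℕ} {z : V} :
    z ∈ off A w m ↔ z ∈ A ∧ ∀ j < m, w j ≠ z := by
  simp [off]

theorem off_sub {A : Finset V} {w : ℕ → V} {m : ℕ} : off A w m ⊆ A := Finset.sdiff_subset

theorem off_card {A : Finset V} {w : ℕ → V} {m : ℕ} (hm : 0 < m) (h : w 0 ∈ A) :
    (off A w m).card < A.card := by
  apply Finset.card_lt_card
  refine Finset.ssubset_iff_subset_ne.2 ⟨off_sub, fun he => ?_⟩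
  rw [← he, mem_off] at h
  exact h.2 0 hm rfl

theorem finish {A : Finset V} {S : Set V} (hD : Drawn A G S) (hN : NoSep A G S)
    {w : ℕ → V} {m : ℕ} (hw : GPath G w m) (hS : ∀ i < m, w i ∈ A ∧ w i ∈ S) {L : V → Finset ℕ}
    {r1 r2 : V} (hr : r1 ∈ A ∧ r1 ∈ S) (hrw : ∀ i < m, w i ≠ r1) {φ : V → ℕ}
    (f3 : ∀ v ∈ off A w m, v ≠ r1 → v ≠ r2 → φ v ∈ L v) (f4 : GProper (off A w m) G φ)
    {e d γ δ : ℕ} (hed : e ≠ d) (hγ : (γ = e ∧ δ = d) ∨ (γ = d ∧ δ = e))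
    (hL : ∀ i < m, e ∈ L (w i) ∧ d ∈ L (w i))
    (hnb : ∀ z ∈ off A w m, z ∉ S → (∃ i < m, G.Adj (w i) z) → φ z ≠ e ∧ φ z ≠ d)
    (hOut : ∀ i z, Out A G S w m i z → φ z ≠ alt γ δ i) :
    ∃ ψ : V → ℕ, (∀ z, (∀ i < m, w i ≠ z) → ψ z = φ z) ∧ (∀ i < m, ψ (w i) = alt γ δ i) ∧
      (∀ v ∈ A, v ≠ r1 → v ≠ r2 → ψ v ∈ L v) ∧ GProper A G ψ := by
  classical
  let ψ : V → ℕ := fun z => if h : ∃ i < m, w i = z then alt γ δ h.choose else φ z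
  have p1 : ∀ z, (∀ i < m, w i ≠ z) → ψ z = φ z := by
    intro z hz
    simp only [ψ]
    rw [dif_neg]
    rintro ⟨i, hi, h⟩
    exact hz i hi h
  have p2 : ∀ i < m, ψ (w i) = alt γ δ i := by
    intro i hi
    have h : ∃ j < m, w j = w i := ⟨i, hi, rfl⟩
    simp only [ψ]
    rw [dif_pos h, hw.inj _ h.choose_spec.1 _ hi h.choose_spec.2]
  have hγδ : γ ≠ δ := by
    rcases hγ with ⟨rfl, rfl⟩ | ⟨rfl, rfl⟩
    · exact hed
    · exact hed.symm
  have halt : ∀ i, alt γ δ i = e ∨ alt γ δ i = d := by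
    intro i
    have := alt_or γ δ i
    rcases hγ with ⟨rfl, rfl⟩ | ⟨rfl, rfl⟩ <;> tauto
  have hcross : ∀ i < m, ∀ z ∈ A, (∀ j < m, w j ≠ z) → G.Adj (w i) z → φ z ≠ alt γ δ i := by
    intro i hi z hz hzw ha
    by_cases hzS : z ∈ S
    · exact hOut i z ⟨hi, hz, hzS, hzw, ha⟩
    · have := hnb z (mem_off.2 ⟨hz, hzw⟩) hzS ⟨i, hi, ha⟩
      rcases halt i with h | h <;> rw [h]
      · exact this.1
      · exact this.2
  have hsucc : ∀ i, alt γ δ i ≠ alt γ δ (i + 1) := by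
    intro i
    unfold alt
    split_ifs with h1 h2 h2
    · omega
    · exact hγδ
    · exact hγδ.symm
    · omega
  refine ⟨ψ, p1, p2, ?_, ?_⟩
  · intro v hv hv1 hv2
    by_cases h : ∃ i < m, w i = v
    · obtain ⟨i, hi, rfl⟩ := h
      rw [p2 i hi]
      rcases halt i with h | h <;> rw [h]
      · exact (hL i hi).1
      · exact (hL i hi).2
    · have h' : ∀ i < m, w i ≠ v := fun i hi he => h ⟨i, hi, he⟩
      rw [p1 v h']
      exact f3 v (mem_off.2 ⟨hv, h'⟩) hv1 hv2
  · intro x hx y hy hxy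
    by_cases h : ∃ i < m, w i = x
    · obtain ⟨i, hi, rfl⟩ := h
      by_cases h' : ∃ j < m, w j = y
      · obtain ⟨j, hj, rfl⟩ := h'
        rw [p2 i hi, p2 j hj]
        rcases lt_trichotomy i j with hij | hij | hij
        · rw [induced_path hD hN hw hS hr hrw hij hj hxy]; exact hsucc i
        · subst hij; exact absurd rfl hxy.ne
        · rw [induced_path hD hN hw hS hr hrw hij hi hxy.symm]; exact (hsucc j).symm
      · have h'' : ∀ i < m, w i ≠ y := fun i hi he => h' ⟨i, hi, he⟩
        rw [p2 i hi, p1 y h'']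
        exact (hcross i hi y hy h'' hxy).symm
    · have hx' : ∀ i < m, w i ≠ x := fun i hi he => h ⟨i, hi, he⟩
      rw [p1 x hx']
      by_cases h' : ∃ j < m, w j = y
      · obtain ⟨j, hj, rfl⟩ := h'
        rw [p2 j hj]
        exact hcross j hj x hx hx' hxy.symm
      · have h'' : ∀ i < m, w i ≠ y := fun i hi he => h' ⟨i, hi, he⟩
        rw [p1 y h'']
        exact f4 x (mem_off.2 ⟨hx, hx'⟩) y (mem_off.2 ⟨hy, h''⟩) hxy

open Classical in
/-- Lists after deleting the path and reserving the colors `e, d` for it. -/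
noncomputable def subL (G : SimpleGraph V) (S : Set V) (L : V → Finset ℕ) (w : ℕ → V) (m e d : ℕ) :
    V → Finset ℕ :=
  fun z => if (∃ i < m, G.Adj (w i) z) ∧ z ∉ S then L z \ {e, d} else L z

theorem subL_sub {S : Set V} {L : V → Finset ℕ} {w : ℕ → V} {m e d : ℕ} (z : V) :
    subL G S L w m e d z ⊆ L z := by
  unfold subL; split_ifs
  · exact Finset.sdiff_subset
  · exact subset_rfl

theorem subL_nb {S : Set V} {L : V → Finset ℕ} {w : ℕ → V} {m e d : ℕ} {z : V}
    (h : (∃ i < m, G.Adj (w i) z)) (hz : z ∉ S) {c : ℕ} (hc : c ∈ subL G S L w m e d z) :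
    c ≠ e ∧ c ≠ d := by
  unfold subL at hc
  rw [if_pos ⟨h, hz⟩] at hc
  simpa using (Finset.mem_sdiff.1 hc).2

theorem subL_lists {A : Finset V} {S : Set V} {L : V → Finset ℕ} {w : ℕ → V} {m e d : ℕ}
    {R : Set V} (hL : GLists (off A w m) S L R) :
    GLists (off A w m) (S ∪ {x | ∃ v ∈ {v | ∃ i < m, w i = v}, G.Adj v x})
      (subL G S L w m e d) R := by
  intro z hz hzR
  have := hL z hz hzR
  unfold subL
  split_ifs with h
  · have h' := card_sdiff2 (L z) e d
    have := this.2 h.2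
    refine ⟨by omega, fun h2 => absurd (Or.inr ?_) h2⟩
    obtain ⟨i, hi, ha⟩ := h.1
    exact ⟨w i, ⟨i, hi, rfl⟩, ha⟩
  · exact ⟨this.1, fun h2 => this.2 (fun h => h2 (Or.inl h))⟩

theorem off_drawn {A : Finset V} {S : Set V} (hD : Drawn A G S) {w : ℕ → V} {m : ℕ}
    (hS : ∀ i < m, w i ∈ A ∧ w i ∈ S) :
    Drawn (off A w m) G (S ∪ {x | ∃ v ∈ {v | ∃ i < m, w i = v}, G.Adj v x}) := by
  refine hD.delete _ ?_ off_sub ?_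
  · rintro v ⟨i, hi, rfl⟩; exact hS i hi
  · rintro v hv ⟨i, hi, h⟩
    exact (mem_off.1 hv).2 i hi h

/-- Non-`S` neighbours of the path avoid colors `e, d`. -/
def NbAvoid (A : Finset V) (G : SimpleGraph V) (S : Set V) (w : ℕ → V) (m e d : ℕ) (φ : V → ℕ) :
    Prop :=
  ∀ z ∈ off A w m, z ∉ S → (∃ i < m, G.Adj (w i) z) → φ z ≠ e ∧ φ z ≠ d

theorem subT {A : Finset V} {S : Set V} (hD : Drawn A G S) {w : ℕ → V} {m : ℕ}
    (hS : ∀ i < m, w i ∈ A ∧ w i ∈ S) {L : V → Finset ℕ} {r1 r2 : V} (h1 : r1 ∈ A ∧ r1 ∈ S)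
    (h2 : r2 ∈ A ∧ r2 ∈ S) (h12 : G.Adj r1 r2) (n1 : ∀ i < m, w i ≠ r1) (n2 : ∀ i < m, w i ≠ r2)
    (hL : GLists (off A w m) S L {r1, r2}) (e d : ℕ) {c1 c2 : ℕ} (hc : c1 ≠ c2) :
    GExt (off A w m) G L r1 r2 (NbAvoid A G S w m e d) c1 c2 := by
  obtain ⟨φ, f1, f2, f3, f4, -⟩ := T2_all (G := G) (off A w m) _ _ r1 r2 (off_drawn hD hS)
    ⟨mem_off.2 ⟨h1.1, n1⟩, Or.inl h1.2⟩ ⟨mem_off.2 ⟨h2.1, n2⟩, Or.inl h2.2⟩ h12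
    (subL_lists (e := e) (d := d) hL) c1 c2 hc
  refine ⟨φ, f1, f2, fun v hv k1 k2 => subL_sub v (f3 v hv k1 k2), f4, ?_⟩
  intro z hz hzS hnb
  exact subL_nb hnb hzS (f3 z hz (fun h => hzS (h ▸ h1.2)) (fun h => hzS (h ▸ h2.2)))

theorem subE {A : Finset V} {S : Set V} (hD : Drawn A G S) {w : ℕ → V} {m : ℕ}
    (hE : EV G (off A w m))
    (hS : ∀ i < m, w i ∈ A ∧ w i ∈ S) {L : V → Finset ℕ} {r1 r2 : V} (h1 : r1 ∈ A ∧ r1 ∈ S)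
    (h2 : r2 ∈ A ∧ r2 ∈ S) (h12 : G.Adj r1 r2) (n1 : ∀ i < m, w i ≠ r1) (n2 : ∀ i < m, w i ≠ r2)
    (hL : GLists (off A w m) S L {r1, r2}) {e d : ℕ} {x : V} (hx : x ∈ A ∧ x ∈ S)
    (nx : ∀ i < m, w i ≠ x) (hx1 : x ≠ r1) (hx2 : x ≠ r2) (hLx : 2 ≤ (L x \ {e, d}).card) :
    Gv (GExt (off A w m) G L r1 r2
      (fun φ => NbAvoid A G S w m e d φ ∧ φ x ≠ e ∧ φ x ≠ d)) := by
  have hE := hE _ (Function.update (subL G S L w m e d) x (L x \ {e, d})) r1 r2 x (off_drawn hD hS)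
    ⟨mem_off.2 ⟨h1.1, n1⟩, Or.inl h1.2⟩ ⟨mem_off.2 ⟨h2.1, n2⟩, Or.inl h2.2⟩
    ⟨mem_off.2 ⟨hx.1, nx⟩, Or.inl hx.2⟩ h12 hx1 hx2
    (by rwa [Function.update_self])
    (by
      intro z hz hzR
      simp only [Set.mem_insert_iff, Set.mem_singleton_iff, not_or] at hzR
      rw [Function.update_of_ne hzR.2.2]
      exact subL_lists hL z hz (by simp [hzR]))
  refine hE.mono ?_
  rintro c1 c2 hc ⟨φ, f1, f2, f3, f4, -⟩
  have hfx := f3 x (mem_off.2 ⟨hx.1, nx⟩) hx1 hx2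
  rw [Function.update_self, Finset.mem_sdiff, Finset.mem_insert, Finset.mem_singleton,
    not_or] at hfx
  refine ⟨φ, f1, f2, ?_, f4, ?_, hfx.2⟩
  · intro v hv k1 k2
    by_cases hvx : v = x
    · rw [hvx]; exact hfx.1
    · have := f3 v hv k1 k2
      rw [Function.update_of_ne hvx] at this
      exact subL_sub v this
  · intro z hz hzS hnb
    have := f3 z hz (fun h => hzS (h ▸ h1.2)) (fun h => hzS (h ▸ h2.2))
    have hzx : z ≠ x := fun h => hzS (h ▸ hx.2)
    rw [Function.update_of_ne hzx] at this
    exact subL_nb hnb hzS this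

theorem card_sdiff2' (s : Finset ℕ) (a b : ℕ) (h : ¬ (a ∈ s ∧ b ∈ s)) :
    s.card ≤ (s \ {a, b}).card + 1 := by
  by_cases ha : a ∈ s
  · have hb : b ∉ s := fun hb => h ⟨ha, hb⟩
    have : s \ {a, b} = s \ {a} := by
      ext x; simp only [Finset.mem_sdiff, Finset.mem_insert, Finset.mem_singleton]
      constructor
      · tauto
      · rintro ⟨h1, h2⟩; refine ⟨h1, ?_⟩; rintro (rfl | rfl) <;> tauto
    rw [this]; exact card_sdiff1 s a
  · have : s \ {a, b} = s \ {b} := by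
      ext x; simp only [Finset.mem_sdiff, Finset.mem_insert, Finset.mem_singleton]
      constructor
      · tauto
      · rintro ⟨h1, h2⟩; refine ⟨h1, ?_⟩; rintro (rfl | rfl) <;> tauto
    rw [this]; exact card_sdiff1 s b

end Paths

section EVsec

variable {V : Type*} [DecidableEq V] {G : SimpleGraph V}

/-- The path data used in the vertex extension argument. -/
structure EVPath (A : Finset V) (G : SimpleGraph V) (S : Set V) (L : V → Finset ℕ) (r1 r2 : V)
    (a b : ℕ) (w : ℕ → V) (m : ℕ) : Prop where
  pos : 0 < m
  path : GPath G w m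
  mem : ∀ i < m, w i ∈ A ∧ w i ∈ S
  n1 : ∀ i < m, w i ≠ r1
  n2 : ∀ i < m, w i ≠ r2
  col : ∀ i < m, a ∈ L (w i) ∧ b ∈ L (w i)
  lists : GLists (off A w m) S L {r1, r2}
  hstart : ∀ x, Out A G S w m 0 x → x ≠ r1 → x ≠ r2 → ¬ (a ∈ L x ∧ b ∈ L x)
  hend : ∀ x, Out A G S w m (m - 1) x → x ≠ r1 → x ≠ r2 → ¬ (a ∈ L x ∧ b ∈ L x)

theorem EVPath.rev {A : Finset V} {S : Set V} {L : V → Finset ℕ} {r1 r2 : V} {a b : ℕ} {w : ℕ → V}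
    {m : ℕ} (h : EVPath A G S L r1 r2 a b w m) :
    EVPath A G S L r1 r2 a b (fun i => w (m - 1 - i)) m where
  pos := h.pos
  path := h.path.rev
  mem := fun i hi => h.mem _ (by omega)
  n1 := fun i hi => h.n1 _ (by omega)
  n2 := fun i hi => h.n2 _ (by omega)
  col := fun i hi => h.col _ (by omega)
  lists := by
    refine h.lists.mono ?_ (fun _ _ h => h)
    intro z hz
    rw [mem_off] at hz ⊢
    refine ⟨hz.1, fun j hj => ?_⟩
    have : w (m - 1 - (m - 1 - j)) ≠ z := hz.2 (m - 1 - j) (by omega)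
    rwa [show m - 1 - (m - 1 - j) = j by omega] at this
  hstart := fun x hx => h.hend x hx.rev
  hend := fun x hx => h.hstart x (by
    have := hx.rev
    rwa [show m - 1 - (m - 1) = 0 by omega] at this)

theorem EVPath.one {A : Finset V} {S : Set V} {L : V → Finset ℕ} {r1 r2 : V} {a b : ℕ} {w : ℕ → V}
    {m : ℕ} (h : EVPath A G S L r1 r2 a b w m) (hab : a ≠ b) (hD : Drawn A G S)
    (hN : NoSep A G S) (h1 : r1 ∈ A ∧ r1 ∈ S) {c1 c2 : ℕ} {φ : V → ℕ} (f1 : φ r1 = c1)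
    (f2 : φ r2 = c2) (f3 : ∀ v ∈ off A w m, v ≠ r1 → v ≠ r2 → φ v ∈ L v)
    (f4 : GProper (off A w m) G φ) (f5 : NbAvoid A G S w m a b φ) {γ δ : ℕ}
    (hγ : (γ = a ∧ δ = b) ∨ (γ = b ∧ δ = a)) (hOut : ∀ i z, Out A G S w m i z → φ z ≠ alt γ δ i) :
    GExt A G L r1 r2 (fun _ => True) c1 c2 := by
  obtain ⟨ψ, p1, p2, p3, p4⟩ := finish hD hN h.path h.mem h1 h.n1 f3 f4 hab hγ h.col f5 hOut
  exact ⟨ψ, by rw [p1 _ h.n1, f1], by rw [p1 _ h.n2, f2], p3, p4, trivial⟩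

theorem pick_color {a b : ℕ} (hab : a ≠ b) (c : ℕ) :
    ∃ γ δ : ℕ, ((γ = a ∧ δ = b) ∨ (γ = b ∧ δ = a)) ∧ c ≠ alt γ δ 0 := by
  by_cases hc : c = a
  · exact ⟨b, a, Or.inr ⟨rfl, rfl⟩, by simp only [alt, hc]; simpa using hab⟩
  · exact ⟨a, b, Or.inl ⟨rfl, rfl⟩, by simpa [alt] using hc⟩

theorem ev_absent {A : Finset V} {S : Set V} {L : V → Finset ℕ} {r1 r2 : V} {a b : ℕ} {w : ℕ → V}
    {m : ℕ} (h : EVPath A G S L r1 r2 a b w m) (hab : a ≠ b) (hD : Drawn A G S)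
    (hN : NoSep A G S) (h1 : r1 ∈ A ∧ r1 ∈ S) (h2 : r2 ∈ A ∧ r2 ∈ S) (h12 : G.Adj r1 r2) {y : V}
    (hOut : ∀ i z, Out A G S w m i z → i = 0 ∧ z = y) :
    Gv (GExt A G L r1 r2 (fun _ => True)) := by
  refine Gv.of_all (fun c1 c2 hc => ?_)
  obtain ⟨φ, f1, f2, f3, f4, f5⟩ := subT hD h.mem h1 h2 h12 h.n1 h.n2 h.lists a b hc
  obtain ⟨γ, δ, hγ, hc0⟩ := pick_color hab (φ y)
  refine h.one hab hD hN h1 f1 f2 f3 f4 f5 hγ ?_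
  intro i z hz
  obtain ⟨rfl, rfl⟩ := hOut i z hz
  exact hc0

theorem ev_free {A : Finset V} {S : Set V} {L : V → Finset ℕ} {r1 r2 : V} {a b : ℕ} {w : ℕ → V}
    {m : ℕ} (ih : ∀ B : Finset V, B.card < A.card → EV G B)
    (h : EVPath A G S L r1 r2 a b w m) (hab : a ≠ b) (hD : Drawn A G S)
    (hN : NoSep A G S) (h1 : r1 ∈ A ∧ r1 ∈ S) (h2 : r2 ∈ A ∧ r2 ∈ S) (h12 : G.Adj r1 r2) {x y : V}
    (hx : Out A G S w m (m - 1) x) (hx1 : x ≠ r1) (hx2 : x ≠ r2)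
    (hOut : ∀ i z, Out A G S w m i z → (i = 0 ∧ z = y) ∨ (i = m - 1 ∧ z = x)) :
    Gv (GExt A G L r1 r2 (fun _ => True)) := by
  have h3 := (h.lists x (mem_off.2 ⟨hx.2.1, hx.2.2.2.1⟩) (by simp [hx1, hx2])).1
  have h4 := card_sdiff2' (L x) a b (h.hend x hx hx1 hx2)
  have hE := subE hD (ih _ (off_card h.pos (h.mem 0 h.pos).1)) h.mem h1 h2 h12 h.n1 h.n2 h.lists
    (e := a) (d := b) ⟨hx.2.1, hx.2.2.1⟩ hx.2.2.2.1 hx1 hx2 (by omega)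
  refine hE.mono ?_
  rintro c1 c2 hc ⟨φ, f1, f2, f3, f4, f5, f6, f7⟩
  obtain ⟨γ, δ, hγ, hc0⟩ := pick_color hab (φ y)
  refine h.one hab hD hN h1 f1 f2 f3 f4 f5 hγ ?_
  intro i z hz
  rcases hOut i z hz with ⟨rfl, rfl⟩ | ⟨hi, rfl⟩
  · exact hc0
  · have := alt_or γ δ i
    rcases hγ with ⟨rfl, rfl⟩ | ⟨rfl, rfl⟩ <;> rcases this with h | h <;> rw [h] <;> assumption

theorem ev_fixed {A : Finset V} {S : Set V} {L : V → Finset ℕ} {r1 r2 : V} {a b : ℕ} {w : ℕ → V}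
    {m : ℕ} (h : EVPath A G S L r1 r2 a b w m) (hab : a ≠ b) (hD : Drawn A G S)
    (hN : NoSep A G S) (h1 : r1 ∈ A ∧ r1 ∈ S) (h2 : r2 ∈ A ∧ r2 ∈ S) (h12 : G.Adj r1 r2) {x y : V}
    (hxy : (x = r1 ∧ y = r2) ∨ (x = r2 ∧ y = r1))
    (hOut : ∀ i z, Out A G S w m i z → (i = 0 ∧ z = y) ∨ (i = m - 1 ∧ z = x)) :
    Gv (GExt A G L r1 r2 (fun _ => True)) := by
  refine Or.inr (Or.inr ⟨a, b, fun c1 c2 hc k1 k2 => ?_⟩)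
  obtain ⟨φ, f1, f2, f3, f4, f5⟩ := subT hD h.mem h1 h2 h12 h.n1 h.n2 h.lists a b hc
  have hne : φ x ≠ φ y := by
    rcases hxy with ⟨rfl, rfl⟩ | ⟨rfl, rfl⟩
    · rwa [f1, f2]
    · rw [f1, f2]; exact hc.symm
  have q1 : ¬ (φ x = a ∧ φ y = b) := by
    rcases hxy with ⟨rfl, rfl⟩ | ⟨rfl, rfl⟩ <;> rw [f1, f2] <;> tauto
  have q2 : ¬ (φ x = b ∧ φ y = a) := by
    rcases hxy with ⟨rfl, rfl⟩ | ⟨rfl, rfl⟩ <;> rw [f1, f2] <;> tauto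
  have key : ∃ γ δ : ℕ, ((γ = a ∧ δ = b) ∨ (γ = b ∧ δ = a)) ∧ φ y ≠ alt γ δ 0 ∧
      φ x ≠ alt γ δ (m - 1) := by
    by_cases hp : (m - 1) % 2 = 0
    · by_cases hA : φ x = a ∨ φ y = a
      · refine ⟨b, a, Or.inr ⟨rfl, rfl⟩, ?_⟩
        simp only [alt, hp, if_true]
        constructor <;> (intro hh; rcases hA with hA | hA <;> simp_all)
      · refine ⟨a, b, Or.inl ⟨rfl, rfl⟩, ?_⟩
        simp only [alt, hp, if_true]
        tauto
    · by_cases hA : φ x = b ∨ φ y = a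
      · refine ⟨b, a, Or.inr ⟨rfl, rfl⟩, ?_⟩
        simp only [alt, hp, if_false]
        simp only [Nat.zero_mod, if_true]
        constructor <;> (intro hh; rcases hA with hA | hA <;> simp_all)
      · refine ⟨a, b, Or.inl ⟨rfl, rfl⟩, ?_⟩
        simp only [alt, hp, if_false]
        simp only [Nat.zero_mod, if_true]
        tauto
  obtain ⟨γ, δ, hγ, hc0, hc1⟩ := key
  refine h.one hab hD hN h1 f1 f2 f3 f4 f5 hγ ?_
  intro i z hz
  rcases hOut i z hz with ⟨rfl, rfl⟩ | ⟨rfl, rfl⟩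
  · exact hc0
  · exact hc1

theorem ev_path {A : Finset V} {S : Set V} {L : V → Finset ℕ} {r1 r2 : V} {a b : ℕ} {w : ℕ → V}
    {m : ℕ} (ih : ∀ B : Finset V, B.card < A.card → EV G B)
    (h : EVPath A G S L r1 r2 a b w m) (hab : a ≠ b) (hD : Drawn A G S)
    (hN : NoSep A G S) (h1 : r1 ∈ A ∧ r1 ∈ S) (h2 : r2 ∈ A ∧ r2 ∈ S) (h12 : G.Adj r1 r2) {y : V}
    (hy : Out A G S w m 0 y) :
    Gv (GExt A G L r1 r2 (fun _ => True)) := by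
  rcases path_ends hD hN h.path h.mem hy with hO | ⟨x, hx, hxy, hO⟩
  · exact ev_absent h hab hD hN h1 h2 h12 hO
  by_cases hxr : x ≠ r1 ∧ x ≠ r2
  · exact ev_free ih h hab hD hN h1 h2 h12 hx hxr.1 hxr.2 hO
  by_cases hyr : y ≠ r1 ∧ y ≠ r2
  · refine ev_free (x := y) (y := x) ih h.rev hab hD hN h1 h2 h12 hy.rev' hyr.1 hyr.2 ?_
    intro i z hz
    have hi := hz.1
    have := h.pos
    rcases hO _ z hz.rev with ⟨h1, h2⟩ | ⟨h1, h2⟩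
    · exact Or.inr ⟨by omega, h2⟩
    · exact Or.inl ⟨by omega, h2⟩
  by_cases hxy' : x = y
  · exfalso
    subst hxy'
    have hm : m ≠ 1 := fun h => hxy h rfl
    have hm0 := h.pos
    obtain ⟨s, hs, hsx, hsw⟩ : ∃ s, (s ∈ A ∧ s ∈ S) ∧ G.Adj x s ∧ ∀ i < m, w i ≠ s := by
      by_cases e : x = r1
      · exact ⟨r2, h2, e ▸ h12, h.n2⟩
      · have e2 : x = r2 := by tauto
        exact ⟨r1, h1, e2 ▸ h12.symm, h.n1⟩
    exact deg_le hD hN ⟨hx.2.1, hx.2.2.1⟩ (h.mem 0 hm0) (h.mem (m - 1) (by omega)) hs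
      hy.2.2.2.2.symm hx.2.2.2.2.symm hsx
      (fun he => absurd (h.path.inj _ hm0 _ (by omega) he) (by omega))
      (hsw 0 hm0) (hsw (m - 1) (by omega))
  refine ev_fixed h hab hD hN h1 h2 h12 (x := x) (y := y) ?_ hO
  have : x = r1 ∨ x = r2 := by tauto
  have : y = r1 ∨ y = r2 := by tauto
  rcases ‹x = r1 ∨ x = r2› with e1 | e1 <;> rcases this with e2 | e2
  · exact absurd (e1.trans e2.symm) hxy'
  · exact Or.inl ⟨e1, e2⟩
  · exact Or.inr ⟨e1, e2⟩
  · exact absurd (e1.trans e2.symm) hxy'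

theorem ev_path' {A : Finset V} {S : Set V} {L : V → Finset ℕ} {r1 r2 : V} {a b : ℕ} {w : ℕ → V}
    {m : ℕ} (ih : ∀ B : Finset V, B.card < A.card → EV G B)
    (h : EVPath A G S L r1 r2 a b w m) (hab : a ≠ b) (hD : Drawn A G S)
    (hN : NoSep A G S) (h1 : r1 ∈ A ∧ r1 ∈ S) (h2 : r2 ∈ A ∧ r2 ∈ S) (h12 : G.Adj r1 r2) :
    Gv (GExt A G L r1 r2 (fun _ => True)) := by
  by_cases hy : ∃ y, Out A G S w m 0 y
  · obtain ⟨y, hy⟩ := hy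
    exact ev_path ih h hab hD hN h1 h2 h12 hy
  by_cases hx : ∃ x, Out A G S w m (m - 1) x
  · obtain ⟨x, hx⟩ := hx
    have := hx.rev'
    rw [show m - 1 - (m - 1) = 0 by omega] at this
    exact ev_path ih h.rev hab hD hN h1 h2 h12 this
  refine ev_absent (y := r1) h hab hD hN h1 h2 h12 ?_
  intro i z hz
  exfalso
  have hi : i ≠ 0 := by rintro rfl; exact hy ⟨z, hz⟩
  have hi' : i ≠ m - 1 := by rintro rfl; exact hx ⟨z, hz⟩
  obtain ⟨k1, k2, k3, k4, k5⟩ := hz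
  have e := h.path.adj (i - 1) (by omega)
  rw [show i - 1 + 1 = i by omega] at e
  exact deg_le hD hN (h.mem i k1) (h.mem (i - 1) (by omega)) (h.mem (i + 1) (by omega)) ⟨k2, k3⟩
    e.symm (h.path.adj i (by omega)) k5
    (fun h' => absurd (h.path.inj _ (by omega) _ (by omega) h') (by omega))
    (k4 _ (by omega)) (k4 _ (by omega))

theorem EV_step {A : Finset V}
    (ih : ∀ B : Finset V, B.card < A.card → EV G B ∧ EE G B) : EV G A := by
  intro S L r1 r2 p hD h1 h2 hp h12 hp1 hp2 hLp hL
  by_cases hN : NoSep A G S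
  swap
  · simp only [NoSep, not_forall, not_not] at hN
    obtain ⟨u, v, A1, A2, h⟩ := hN
    rcases h.edge h1.1 h2.1 h12 with ⟨k1, k2⟩ | ⟨k1, k2⟩
    · exact EV_sep h ih hD ⟨k1, h1.2⟩ ⟨k2, h2.2⟩ hp h12 hp1 hp2 hLp hL
    · exact EV_sep h.symm ih hD ⟨k1, h1.2⟩ ⟨k2, h2.2⟩ hp h12 hp1 hp2 hLp hL
  obtain ⟨a, ha, b, hb, hab⟩ := Finset.one_lt_card.1 (show 1 < (L p).card by omega)
  let P : (ℕ → V) → ℕ → Prop := fun w m => GPath G w m ∧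
    (∀ i < m, w i ∈ A ∧ w i ∈ S ∧ w i ≠ r1 ∧ w i ≠ r2 ∧ a ∈ L (w i) ∧ b ∈ L (w i)) ∧
    ∃ i < m, w i = p
  obtain ⟨w, m, ⟨hw, hQ, i0, hi0, hi0p⟩, hmax⟩ := exists_longest (P := P) (N := A.card)
    (w := fun _ => p) (m := 1)
    ⟨⟨fun i hi j hj _ => by omega, fun i hi => by omega⟩,
      fun i _ => ⟨hp.1, hp.2, hp1, hp2, ha, hb⟩, 0, by omega, rfl⟩
    (fun w m h => h.1.le_card (fun i hi => (h.2.1 i hi).1))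
  have hend : ∀ w', P w' m → ∀ x, Out A G S w' m (m - 1) x → x ≠ r1 → x ≠ r2 →
      ¬ (a ∈ L x ∧ b ∈ L x) := by
    rintro w' ⟨hw', hQ', j0, hj0, hj0p⟩ x hx k1 k2 hxL
    have := hmax (fun i => if i < m then w' i else x) (m + 1)
      ⟨hw'.snoc hx.2.2.2.1 hx.2.2.2.2, ?_, j0, by omega, by simp [hj0, hj0p]⟩
    · omega
    · intro i hi
      by_cases h : i < m
      · simp only [h, if_true]; exact hQ' i h
      · simp only [h, if_false]; exact ⟨hx.2.1, hx.2.2.1, k1, k2, hxL⟩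
  have hP : EVPath A G S L r1 r2 a b w m :=
    { pos := by omega
      path := hw
      mem := fun i hi => ⟨(hQ i hi).1, (hQ i hi).2.1⟩
      n1 := fun i hi => (hQ i hi).2.2.1
      n2 := fun i hi => (hQ i hi).2.2.2.1
      col := fun i hi => (hQ i hi).2.2.2.2
      lists := by
        refine hL.mono off_sub ?_
        rintro v hv (h | h | h)
        · exact Or.inl h
        · exact Or.inr h
        · rw [mem_off] at hv
          exact absurd (hi0p.trans h.symm) (hv.2 i0 hi0)
      hstart := by
        intro x hx
        refine hend (fun i => w (m - 1 - i)) ⟨hw.rev, fun i hi => hQ _ (by omega), m - 1 - i0,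
          by omega, ?_⟩ x hx.rev'
        change w (m - 1 - (m - 1 - i0)) = p
        rw [show m - 1 - (m - 1 - i0) = i0 by omega, hi0p]
      hend := hend w ⟨hw, hQ, i0, hi0, hi0p⟩ }
  exact ev_path' (fun B hB => (ih B hB).1) hP hab hD hN h1 h2 h12

end EVsec

section EEsec

variable {V : Type*} [DecidableEq V] {G : SimpleGraph V}

/-- The path data used in the edge extension argument. -/
structure EEPath (A : Finset V) (G : SimpleGraph V) (S : Set V) (L : V → Finset ℕ) (r1 r2 u v : V)
    (a b d : ℕ) (w : ℕ → V) (m : ℕ) : Prop where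
  pos : 0 < m
  path : GPath G w m
  mem : ∀ i < m, w i ∈ A ∧ w i ∈ S
  n1 : ∀ i < m, w i ≠ r1
  n2 : ∀ i < m, w i ≠ r2
  nu : ∀ i < m, w i ≠ u
  col : ∀ i < m, a ∈ L (w i) ∧ b ∈ L (w i) ∧ d ∈ L (w i)
  start : w 0 = v
  hend : ∀ x, Out A G S w m (m - 1) x → x ≠ r1 → x ≠ r2 → x ≠ u →
    ¬ (a ∈ L x ∧ b ∈ L x ∧ d ∈ L x)

theorem EEPath.one {A : Finset V} {S : Set V} {L : V → Finset ℕ} {r1 r2 u v : V} {a b d : ℕ}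
    {w : ℕ → V} {m : ℕ} (h : EEPath A G S L r1 r2 u v a b d w m) (hda : d ≠ a) (hdb : d ≠ b)
    (hD : Drawn A G S)
    (hN : NoSep A G S) (h1 : r1 ∈ A ∧ r1 ∈ S) {c1 c2 : ℕ} {φ : V → ℕ} (f1 : φ r1 = c1)
    (f2 : φ r2 = c2) (f3 : ∀ v ∈ off A w m, v ≠ r1 → v ≠ r2 → φ v ∈ L v)
    (f4 : GProper (off A w m) G φ) {e : ℕ} (he : e = a ∨ e = b) (f5 : NbAvoid A G S w m e d φ)
    (hOut : ∀ i z, Out A G S w m i z → (i = 0 ∧ z = u) ∨ (φ z ≠ e ∧ φ z ≠ d)) :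
    GExt A G L r1 r2 (Avoid u v a b) c1 c2 := by
  have hed : e ≠ d := by
    rcases he with rfl | rfl
    · exact hda.symm
    · exact hdb.symm
  have key : ∃ γ δ : ℕ, ((γ = e ∧ δ = d) ∨ (γ = d ∧ δ = e)) ∧ φ u ≠ γ ∧ (φ u = d ∨ γ = d) := by
    by_cases hu : φ u = d
    · exact ⟨e, d, Or.inl ⟨rfl, rfl⟩, by rw [hu]; exact hed.symm, Or.inl hu⟩
    · exact ⟨d, e, Or.inr ⟨rfl, rfl⟩, hu, Or.inr rfl⟩
  obtain ⟨γ, δ, hγ, hu, hud⟩ := key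
  obtain ⟨ψ, p1, p2, p3, p4⟩ := finish hD hN h.path h.mem h1 h.n1 f3 f4 hed hγ
    (fun i hi => ⟨by rcases he with rfl | rfl; exacts [(h.col i hi).1, (h.col i hi).2.1],
      (h.col i hi).2.2⟩) f5 (by
      intro i z hz
      rcases hOut i z hz with ⟨rfl, rfl⟩ | hne
      · simpa [alt] using hu
      · have := alt_or γ δ i
        rcases hγ with ⟨rfl, rfl⟩ | ⟨rfl, rfl⟩ <;> rcases this with h | h <;> rw [h]
        exacts [hne.1, hne.2, hne.2, hne.1])
  refine ⟨ψ, by rw [p1 _ h.n1, f1], by rw [p1 _ h.n2, f2], p3, p4, ?_⟩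
  have q1 : ψ u = φ u := p1 u h.nu
  have q2 : ψ v = γ := by rw [← h.start, p2 0 h.pos]; simp [alt]
  unfold Avoid
  rw [q1, q2]
  rcases hud with hh | hh <;> rw [hh]
  · exact ⟨fun h => hda h.1, fun h => hdb h.1⟩
  · exact ⟨fun h => hdb h.2, fun h => hda h.2⟩

theorem ee_path {A : Finset V} {S : Set V} {L : V → Finset ℕ} {r1 r2 u v : V} {a b d : ℕ}
    {w : ℕ → V} {m : ℕ} (ih : ∀ B : Finset V, B.card < A.card → EV G B)
    (h : EEPath A G S L r1 r2 u v a b d w m) (hab : a ≠ b) (hda : d ≠ a) (hdb : d ≠ b)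
    (hD : Drawn A G S) (hN : NoSep A G S) (h1 : r1 ∈ A ∧ r1 ∈ S) (h2 : r2 ∈ A ∧ r2 ∈ S)
    (h12 : G.Adj r1 r2) (hu : u ∈ A ∧ u ∈ S) (huv : G.Adj u v) (hL : GLists A S L {r1, r2}) :
    Gv (GExt A G L r1 r2 (Avoid u v a b)) := by
  have hy : Out A G S w m 0 u := ⟨h.pos, hu.1, hu.2, h.nu, by rw [h.start]; exact huv.symm⟩
  have hL' : GLists (off A w m) S L {r1, r2} := hL.mono off_sub (fun _ _ h => h)
  rcases path_ends hD hN h.path h.mem hy with hO | ⟨x, hx, hxy, hO⟩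
  · refine Gv.of_all (fun c1 c2 hc => ?_)
    obtain ⟨φ, f1, f2, f3, f4, f5⟩ := subT hD h.mem h1 h2 h12 h.n1 h.n2 hL' a d hc
    exact h.one hda hdb hD hN h1 f1 f2 f3 f4 (Or.inl rfl) f5 (fun i z hz => Or.inl (hO i z hz))
  by_cases hxu : x = u
  · exfalso
    subst hxu
    have hm : m ≠ 1 := fun h => hxy h rfl
    have hm0 := h.pos
    have hs : (∃ s, (s ∈ A ∧ s ∈ S) ∧ G.Adj x s ∧ ∀ i < m, w i ≠ s) ∨ (x ≠ r1 ∧ x ≠ r2) := by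
      by_cases e : x = r1
      · exact Or.inl ⟨r2, h2, e ▸ h12, h.n2⟩
      by_cases e2 : x = r2
      · exact Or.inl ⟨r1, h1, e2 ▸ h12.symm, h.n1⟩
      exact Or.inr ⟨e, e2⟩
    rcases hs with ⟨s, hs, hsx, hsw⟩ | ⟨k1, k2⟩
    · exact deg_le hD hN ⟨hx.2.1, hx.2.2.1⟩ (h.mem 0 hm0) (h.mem (m - 1) (by omega)) hs
        hy.2.2.2.2.symm hx.2.2.2.2.symm hsx
        (fun he => absurd (h.path.inj _ hm0 _ (by omega) he) (by omega))
        (hsw 0 hm0) (hsw (m - 1) (by omega))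
    · refine no_cycle hD hN (w := fun i => if i < m then w i else x) (n := m + 1) (by omega)
        (h.path.snoc h.nu hx.2.2.2.2) ?_ ?_ h1 ?_
      · simp only [show m + 1 - 1 = m by omega, lt_irrefl, if_false, hm0, if_true]
        exact hy.2.2.2.2.symm
      · intro i hi
        by_cases h' : i < m
        · simp only [h', if_true]; exact h.mem i h'
        · simp only [h', if_false]; exact hu
      · intro i hi
        by_cases h' : i < m
        · simp only [h', if_true]; exact h.n1 i h'
        · simp only [h', if_false]; exact k1
  by_cases hx1 : x = r1
  · refine Or.inl ⟨d, fun c1 c2 hc hcd => ?_⟩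
    obtain ⟨e, he, hec⟩ : ∃ e, (e = a ∨ e = b) ∧ c1 ≠ e := by
      by_cases hca : c1 = a
      · exact ⟨b, Or.inr rfl, by rw [hca]; exact hab⟩
      · exact ⟨a, Or.inl rfl, hca⟩
    obtain ⟨φ, f1, f2, f3, f4, f5⟩ := subT hD h.mem h1 h2 h12 h.n1 h.n2 hL' e d hc
    refine h.one hda hdb hD hN h1 f1 f2 f3 f4 he f5 (fun i z hz => ?_)
    rcases hO i z hz with hz | ⟨-, rfl⟩
    · exact Or.inl hz
    · rw [hx1, f1]; exact Or.inr ⟨hec, hcd⟩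
  by_cases hx2 : x = r2
  · refine Or.inr (Or.inl ⟨d, fun c1 c2 hc hcd => ?_⟩)
    obtain ⟨e, he, hec⟩ : ∃ e, (e = a ∨ e = b) ∧ c2 ≠ e := by
      by_cases hca : c2 = a
      · exact ⟨b, Or.inr rfl, by rw [hca]; exact hab⟩
      · exact ⟨a, Or.inl rfl, hca⟩
    obtain ⟨φ, f1, f2, f3, f4, f5⟩ := subT hD h.mem h1 h2 h12 h.n1 h.n2 hL' e d hc
    refine h.one hda hdb hD hN h1 f1 f2 f3 f4 he f5 (fun i z hz => ?_)
    rcases hO i z hz with hz | ⟨-, rfl⟩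
    · exact Or.inl hz
    · rw [hx2, f2]; exact Or.inr ⟨hec, hcd⟩
  have hnc := h.hend x hx hx1 hx2 hxu
  obtain ⟨e, he, hec⟩ : ∃ e, (e = a ∨ e = b) ∧ ¬ (e ∈ L x ∧ d ∈ L x) := by
    by_cases hca : a ∈ L x
    · exact ⟨b, Or.inr rfl, by tauto⟩
    · exact ⟨a, Or.inl rfl, by tauto⟩
  have h3 := (hL x hx.2.1 (by simp [hx1, hx2])).1
  have h4 := card_sdiff2' (L x) e d hec
  have hE := subE hD (ih _ (off_card h.pos (h.mem 0 h.pos).1)) h.mem h1 h2 h12 h.n1 h.n2 hL'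
    (e := e) (d := d) ⟨hx.2.1, hx.2.2.1⟩ hx.2.2.2.1 hx1 hx2 (by omega)
  refine hE.mono ?_
  rintro c1 c2 hc ⟨φ, f1, f2, f3, f4, f5, f6, f7⟩
  refine h.one hda hdb hD hN h1 f1 f2 f3 f4 he f5 (fun i z hz => ?_)
  rcases hO i z hz with hz | ⟨-, rfl⟩
  · exact Or.inl hz
  · exact Or.inr ⟨f6, f7⟩

theorem ee_core {A : Finset V} {S : Set V} {L : V → Finset ℕ} {r1 r2 u v : V} {a b : ℕ}
    (ih : ∀ B : Finset V, B.card < A.card → EV G B) (hEV : EV G A)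
    (hD : Drawn A G S) (hN : NoSep A G S) (h1 : r1 ∈ A ∧ r1 ∈ S) (h2 : r2 ∈ A ∧ r2 ∈ S)
    (h12 : G.Adj r1 r2) (hu : u ∈ A ∧ u ∈ S) (hv : v ∈ A ∧ v ∈ S) (huv : G.Adj u v)
    (hv1 : v ≠ r1) (hv2 : v ≠ r2) (hL : GLists A S L {r1, r2}) :
    Gv (GExt A G L r1 r2 (Avoid u v a b)) := by
  by_cases hab : a = b
  · refine Gv.of_all (fun c1 c2 hc => ?_)
    obtain ⟨φ, f1, f2, f3, f4, -⟩ := T2_all (G := G) A S L r1 r2 hD h1 h2 h12 hL c1 c2 hc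
    have hne := f4 u hu.1 v hv.1 huv
    refine ⟨φ, f1, f2, f3, f4, ?_, ?_⟩
    · rintro ⟨k1, k2⟩; exact hne (by rw [k1, k2, hab])
    · rintro ⟨k1, k2⟩; exact hne (by rw [k1, k2, hab])
  have h3 := (hL v hv.1 (by simp [hv1, hv2])).1
  by_cases hvL : a ∈ L v ∧ b ∈ L v
  swap
  · have h4 := card_sdiff2' (L v) a b hvL
    have hE := hEV S (Function.update L v (L v \ {a, b})) r1 r2 v hD h1 h2 hv h12 hv1 hv2
      (by rw [Function.update_self]; omega)
      (by
        intro z hz hzR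
        simp only [Set.mem_insert_iff, Set.mem_singleton_iff, not_or] at hzR
        rw [Function.update_of_ne hzR.2.2]
        exact hL z hz (by simp [hzR]))
    refine hE.mono ?_
    rintro c1 c2 hc ⟨φ, f1, f2, f3, f4, -⟩
    have hfv := f3 v hv.1 hv1 hv2
    rw [Function.update_self, Finset.mem_sdiff, Finset.mem_insert, Finset.mem_singleton,
      not_or] at hfv
    refine ⟨φ, f1, f2, ?_, f4, fun h => hfv.2.2 h.2, fun h => hfv.2.1 h.2⟩
    intro z hz hz1 hz2
    by_cases hzv : z = v
    · rw [hzv]; exact hfv.1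
    · have := f3 z hz hz1 hz2
      rwa [Function.update_of_ne hzv] at this
  have h4 := card_sdiff2 (L v) a b
  obtain ⟨d, hd⟩ := Finset.card_pos.1 (show 0 < (L v \ {a, b}).card by omega)
  rw [Finset.mem_sdiff, Finset.mem_insert, Finset.mem_singleton, not_or] at hd
  let P : (ℕ → V) → ℕ → Prop := fun w m => GPath G w m ∧
    (∀ i < m, w i ∈ A ∧ w i ∈ S ∧ w i ≠ r1 ∧ w i ≠ r2 ∧ w i ≠ u ∧ a ∈ L (w i) ∧ b ∈ L (w i) ∧
      d ∈ L (w i)) ∧ 0 < m ∧ w 0 = v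
  obtain ⟨w, m, ⟨hw, hQ, hm, hw0⟩, hmax⟩ := exists_longest (P := P) (N := A.card)
    (w := fun _ => v) (m := 1)
    ⟨⟨fun i hi j hj _ => by omega, fun i hi => by omega⟩,
      fun i _ => ⟨hv.1, hv.2, hv1, hv2, huv.ne.symm, hvL.1, hvL.2, hd.1⟩, by omega, rfl⟩
    (fun w m h => h.1.le_card (fun i hi => (h.2.1 i hi).1))
  have hP : EEPath A G S L r1 r2 u v a b d w m :=
    { pos := hm
      path := hw
      mem := fun i hi => ⟨(hQ i hi).1, (hQ i hi).2.1⟩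
      n1 := fun i hi => (hQ i hi).2.2.1
      n2 := fun i hi => (hQ i hi).2.2.2.1
      nu := fun i hi => (hQ i hi).2.2.2.2.1
      col := fun i hi => (hQ i hi).2.2.2.2.2
      start := hw0
      hend := by
        intro x hx k1 k2 k3 hxL
        have := hmax (fun i => if i < m then w i else x) (m + 1)
          ⟨hw.snoc hx.2.2.2.1 hx.2.2.2.2, ?_, by omega, by simp [hm, hw0]⟩
        · omega
        · intro i hi
          by_cases h : i < m
          · simp only [h, if_true]; exact hQ i h
          · simp only [h, if_false]; exact ⟨hx.2.1, hx.2.2.1, k1, k2, k3, hxL⟩ }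
  exact ee_path ih hP hab hd.2.1 hd.2.2 hD hN h1 h2 h12 hu huv hL

theorem EE_step {A : Finset V}
    (ih : ∀ B : Finset V, B.card < A.card → EV G B ∧ EE G B) (hEV : EV G A) : EE G A := by
  intro S L r1 r2 u v a b hD h1 h2 hu hv h12 huv k1 k2 hL
  by_cases hN : NoSep A G S
  swap
  · simp only [NoSep, not_forall, not_not] at hN
    obtain ⟨u', v', A1, A2, h⟩ := hN
    rcases h.edge h1.1 h2.1 h12 with ⟨q1, q2⟩ | ⟨q1, q2⟩
    · exact EE_sep h ih hD ⟨q1, h1.2⟩ ⟨q2, h2.2⟩ hu hv h12 huv k1 k2 hL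
    · exact EE_sep h.symm ih hD ⟨q1, h1.2⟩ ⟨q2, h2.2⟩ hu hv h12 huv k1 k2 hL
  by_cases hvr : v ≠ r1 ∧ v ≠ r2
  · exact ee_core (fun B hB => (ih B hB).1) hEV hD hN h1 h2 h12 hu hv huv hvr.1 hvr.2 hL
  · have hur : u ≠ r1 ∧ u ≠ r2 := by
      have hne := huv.ne
      constructor
      · rintro rfl; apply hvr; exact ⟨hne.symm, fun h => k1 ⟨rfl, h⟩⟩
      · rintro rfl; apply hvr; exact ⟨fun h => k2 ⟨rfl, h⟩, hne.symm⟩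
    refine (ee_core (a := a) (b := b) (fun B hB => (ih B hB).1) hEV hD hN h1 h2 h12 hv hu huv.symm
      hur.1 hur.2 hL).mono ?_
    rintro c1 c2 hc ⟨φ, f1, f2, f3, f4, f5, f6⟩
    exact ⟨φ, f1, f2, f3, f4, fun h => f6 ⟨h.2, h.1⟩, fun h => f5 ⟨h.2, h.1⟩⟩

theorem E_all (A : Finset V) : EV G A ∧ EE G A := by
  induction hn : A.card using Nat.strong_induction_on generalizing A with
  | _ n ih =>
    subst hn
    have h : EV G A := EV_step (fun B hB => ih B.card hB B rfl)
    exact ⟨h, EE_step (fun B hB => ih B.card hB B rfl) h⟩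

theorem pick_pair {P : ℕ → ℕ → Prop} (h : Gv P) {s t : Finset ℕ} (hs : 2 ≤ s.card)
    (ht : 3 ≤ t.card) : ∃ c1 ∈ s, ∃ c2 ∈ t, c1 ≠ c2 ∧ P c1 c2 := by
  rcases h with ⟨a, h⟩ | ⟨a, h⟩ | ⟨a, b, h⟩
  · have := card_sdiff1 s a
    obtain ⟨c1, hc1⟩ := Finset.card_pos.1 (show 0 < (s \ {a}).card by omega)
    have := card_sdiff1 t c1
    obtain ⟨c2, hc2⟩ := Finset.card_pos.1 (show 0 < (t \ {c1}).card by omega)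
    simp only [Finset.mem_sdiff, Finset.mem_singleton] at hc1 hc2
    exact ⟨c1, hc1.1, c2, hc2.1, fun h => hc2.2 h.symm, h _ _ (fun h => hc2.2 h.symm) hc1.2⟩
  · obtain ⟨c1, hc1⟩ := Finset.card_pos.1 (show 0 < s.card by omega)
    have := card_sdiff2 t c1 a
    obtain ⟨c2, hc2⟩ := Finset.card_pos.1 (show 0 < (t \ {c1, a}).card by omega)
    simp only [Finset.mem_sdiff, Finset.mem_insert, Finset.mem_singleton, not_or] at hc2
    exact ⟨c1, hc1, c2, hc2.1, fun h => hc2.2.1 h.symm,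
      h _ _ (fun h => hc2.2.1 h.symm) hc2.2.2⟩
  · obtain ⟨c2, hc2⟩ := Finset.card_pos.1
      (show 0 < (t \ {a, b}).card by have := card_sdiff2 t a b; omega)
    have := card_sdiff1 s c2
    obtain ⟨c1, hc1⟩ := Finset.card_pos.1 (show 0 < (s \ {c2}).card by omega)
    simp only [Finset.mem_sdiff, Finset.mem_insert, Finset.mem_singleton, not_or] at hc1 hc2
    exact ⟨c1, hc1.1, c2, hc2.1, hc1.2, h _ _ hc1.2 (fun h => hc2.2.2 h.2) (fun h => hc2.2.1 h.2)⟩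

/-- Combinatorial form of the theorem. -/
theorem combi_main {A : Finset V} {S : Set V} (hD : Drawn A G S) {L : V → Finset ℕ} {p1 p2 q : V}
    (h1 : p1 ∈ A ∧ p1 ∈ S) (h2 : p2 ∈ A ∧ p2 ∈ S) (hq : q ∈ A ∧ q ∈ S) (hadj : G.Adj p2 q)
    (hL1 : 2 ≤ (L p1).card) (hL2 : 2 ≤ (L p2).card) (hL : GLists A S L {p1, p2}) :
    ∃ φ : V → ℕ, (∀ v ∈ A, φ v ∈ L v) ∧ GProper A G φ := by
  have fin : ∀ c1 ∈ L p2, ∀ c2 ∈ L q, GExt A G L p2 q (fun _ => True) c1 c2 →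
      ∃ φ : V → ℕ, (∀ v ∈ A, φ v ∈ L v) ∧ GProper A G φ := by
    rintro c1 hc1 c2 hc2 ⟨φ, f1, f2, f3, f4, -⟩
    refine ⟨φ, fun v hv => ?_, f4⟩
    by_cases e1 : v = p2
    · rw [e1, f1]; exact hc1
    by_cases e2 : v = q
    · rw [e2, f2]; exact hc2
    exact f3 v hv e1 e2
  by_cases hc : p1 = p2 ∨ p1 = q
  · have hq2 : 2 ≤ (L q).card := by
      by_cases e : q = p1
      · rw [e]; exact hL1
      · have := (hL q hq.1 (by simp [e, hadj.ne.symm])).1; omega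
    obtain ⟨c1, hc1⟩ := Finset.card_pos.1 (show 0 < (L p2).card by omega)
    have := card_sdiff1 (L q) c1
    obtain ⟨c2, hc2⟩ := Finset.card_pos.1 (show 0 < (L q \ {c1}).card by omega)
    simp only [Finset.mem_sdiff, Finset.mem_singleton] at hc2
    refine fin c1 hc1 c2 hc2.1 (T2_all A S L p2 q hD h2 hq hadj (hL.mono subset_rfl ?_) c1 c2
      (fun h => hc2.2 h.symm))
    rintro v hv (h | h)
    · rcases hc with hc | hc
      · exact Or.inl (h.trans hc)
      · exact Or.inr (h.trans hc)
    · exact Or.inl h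
  · rw [not_or] at hc
    have hE := (E_all (G := G) A).1 S L p2 q p1 hD h2 hq h1 hadj hc.1 hc.2 hL1
      (hL.mono subset_rfl (by
        rintro v hv (h | h)
        · exact Or.inr (Or.inr h)
        · exact Or.inl h))
    have hq3 := (hL q hq.1 (by
      rintro (h | h)
      · exact hc.2 h.symm
      · exact hadj.ne h.symm)).1
    obtain ⟨c1, hc1, c2, hc2, -, hP⟩ := pick_pair hE hL2 hq3
    exact fin c1 hc1 c2 hc2 hP

end EEsec

/-- Theorem 1.2, two vertices with lists of size two:
Let `G` be a plane graph with outer cycle `C`, let `p₁, p₂ ∈ V(C)`, and let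
`L` be a list assignment for `G` with `|L(v)| ≥ 5` for `v ∈ V(G) − V(C)`,
`|L(v)| ≥ 3` for `v ∈ V(C) − {p₁, p₂}`, `|L(p₁)| ≥ 2` and `|L(p₂)| ≥ 2`.
Then `G` has an `L`-coloring. -/
theorem two_lists_of_size_two {V : Type u} (G : PlaneGraph V) (C : List V)
    (p1 p2 : V) (L : V → Finset ℕ)
    (hC : G.IsOuterCycle C)
    (hp1 : p1 ∈ C) (hp2 : p2 ∈ C)
    (hnonempty : ∀ v ∈ G.verts, (L v).Nonempty)
    (h5 : ∀ v ∈ G.verts, v ∉ C → 5 ≤ (L v).card)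
    (h3 : ∀ v ∈ C, v ≠ p1 → v ≠ p2 → 3 ≤ (L v).card)
    (h1 : 2 ≤ (L p1).card) (h2 : 2 ≤ (L p2).card) :
    G.HasLColoring L := by
  classical
  obtain ⟨i, hi⟩ := List.get_of_mem hp2
  have hCv := hC.2.2.1
  have hCa := hC.2.2.2.1
  obtain ⟨φ, f1, f2⟩ := combi_main (G.drawn C hC) (L := L) (p1 := p1) (p2 := p2)
    (q := C.get (cycNext C i))
    ⟨by simpa using hCv p1 hp1, hp1⟩ ⟨by simpa using hCv p2 hp2, hp2⟩
    ⟨(Set.Finite.mem_toFinset _).2 (hCv _ (List.get_mem _ _)), List.get_mem _ _⟩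
    (by have := hCa i; rw [hi] at this; exact this) h1 h2
    (by
      intro v hv hvR
      have hv' : v ∈ G.verts := by simpa using hv
      have ha : v ≠ p1 := fun h => hvR (by simp [h])
      have hb : v ≠ p2 := fun h => hvR (by simp [h])
      by_cases hvC : v ∈ C
      · exact ⟨h3 v hvC ha hb, fun h => absurd hvC h⟩
      · have := h5 v hv' hvC
        exact ⟨by omega, fun _ => this⟩)
  exact ⟨φ, fun v hv => f1 v (by simpa using hv), fun u v huv =>
    f2 u ((Set.Finite.mem_toFinset _).2 (G.adj_mem u v huv)) v
      ((Set.Finite.mem_toFinset _).2 (G.adj_mem v u (G.adj_symm u v huv))) huv⟩
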